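/- For every dimension d ≥ 1 there exists p₀ such that for every p ≥ p₀ there exists N₀ (depending on p) such that for every integer N ≥ N₀ there exists γ₀ ∈ (0,1) (depending on N) such that for every γ ∈ (0, γ₀], every finite rectangle Λ ⊂ ℤ^d, every energy E ∈ ℝ, and every δ with γ^{diam(Λ)/2} ≤ δ < 1, the expected number of eigenvalues of the Anderson Hamiltonian H in I_δ(E) satisfies 𝔼 𝒩(I_δ(E)) ≤ |Λ| · (log_γ δ)^{−p}. -/

import Mathlib

noncomputable section

open scoped BigOperators

/-- ℓ¹ distance on `ℤ^d` (natural-number valued). -/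
def dist1 {d : ℕ} (x y : Fin d → ℤ) : ℕ := ∑ i, (x i - y i).natAbs

lemma dist1_comm {d : ℕ} (x y : Fin d → ℤ) : dist1 x y = dist1 y x :=
  Finset.sum_congr rfl fun i _ => by rw [← Int.natAbs_neg, neg_sub]

/-- ℓ¹ diameter of a finite subset of `ℤ^d`. -/
def diam1 {d : ℕ} (Λ : Finset (Fin d → ℤ)) : ℕ := (Λ ×ˢ Λ).sup fun p => dist1 p.1 p.2

/-- `Λ` is a (possibly empty) rectangle: a product of integer intervals. -/
def IsRect {d : ℕ} (Λ : Finset (Fin d → ℤ)) : Prop := ∃ a b : Fin d → ℤ, Λ = Finset.Icc a b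

/-- Entry of the Anderson Hamiltonian `H = H₀ - γ J` with potential `v`. -/
def hamEntry (d : ℕ) (γ : ℝ) (v : (Fin d → ℤ) → ℝ) (x y : Fin d → ℤ) : ℝ :=
  (if x = y then 2*d*γ + v x else 0) - γ * (if dist1 x y = 1 then 1 else 0)

/-- The Anderson Hamiltonian restricted to a finite set `X ⊂ ℤ^d`. -/
def hamOn (d : ℕ) (γ : ℝ) (v : (Fin d → ℤ) → ℝ) (X : Finset (Fin d → ℤ)) :
    Matrix X X ℝ := Matrix.of fun x y => hamEntry d γ v x y

lemma hamOn_isHermitian (d : ℕ) (γ : ℝ) (v : (Fin d → ℤ) → ℝ) (X : Finset (Fin d → ℤ)) :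
    (hamOn d γ v X).IsHermitian := by
  ext x y
  simp only [Matrix.conjTranspose_apply, hamOn, Matrix.of_apply, hamEntry, star_trivial]
  rw [dist1_comm]
  by_cases h : (y : Fin d → ℤ) = (x : Fin d → ℤ)
  · rw [if_pos h, if_pos h.symm, h]
  · rw [if_neg h, if_neg (show ¬((x : Fin d → ℤ) = (y : Fin d → ℤ)) from fun hh => h hh.symm)]

open scoped Classical in
/-- Number of eigenvalues (with multiplicity) of a Hermitian matrix in `[a,b]`. -/
def countEigIn {n : Type*} [Fintype n] [DecidableEq n] {M : Matrix n n ℝ}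
    (hM : M.IsHermitian) (a b : ℝ) : ℕ :=
  (Finset.univ.filter fun i => hM.eigenvalues i ∈ Set.Icc a b).card

/-- Expectation with respect to the uniform measure on a finite configuration space. -/
def expect {Ω : Type*} [Fintype Ω] (f : Ω → ℝ) : ℝ := (∑ ω, f ω) / Fintype.card Ω

open scoped Classical in
/-- Probability of an event with respect to the uniform measure on a finite space. -/
def prob {Ω : Type*} [Fintype Ω] (A : Ω → Prop) : ℝ :=
  ((Finset.univ.filter A).card : ℝ) / Fintype.card Ω

/-- The random potential determined by a configuration `ω : Λ → Fin N`:
the value at `x ∈ Λ` is `ω x / (N-1) ∈ {0, 1/(N-1), …, 1}`. -/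
def potential {d : ℕ} (N : ℕ) (Λ : Finset (Fin d → ℤ)) (ω : Λ → Fin N) :
    (Fin d → ℤ) → ℝ := fun x => if h : x ∈ Λ then (ω ⟨x, h⟩ : ℕ) / ((N : ℝ) - 1) else 0


/-! ### Basic geometry and the operator `H - E` on functions on `ℤ^d` -/

/-- `ℓ^∞` closeness. -/
def near {d : ℕ} (r : ℤ) (x y : Fin d → ℤ) : Prop := ∀ i, |x i - y i| ≤ r

/-- unit steps -/
def stp {d : ℕ} (u : Fin d × Bool) : Fin d → ℤ := Pi.single u.1 (if u.2 then 1 else -1)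

/-- the operator `H - E` acting on arbitrary functions. -/
def Aop {d : ℕ} (γ E : ℝ) (v ψ : (Fin d → ℤ) → ℝ) (x : Fin d → ℤ) : ℝ :=
  (2 * d * γ + v x - E) * ψ x - γ * ∑ u : Fin d × Bool, ψ (x + stp u)

lemma near_self {d : ℕ} {r : ℤ} (hr : 0 ≤ r) (x : Fin d → ℤ) : near r x x := by
  intro i; simpa using hr

lemma near_symm {d : ℕ} {r : ℤ} {x y : Fin d → ℤ} (h : near r x y) : near r y x := by
  intro i; rw [abs_sub_comm]; exact h i

lemma near_mono {d : ℕ} {r s : ℤ} {x y : Fin d → ℤ} (h : near r x y) (hrs : r ≤ s) :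
    near s x y := fun i => (h i).trans hrs

lemma near_trans {d : ℕ} {r s t : ℤ} {x y z : Fin d → ℤ} (h : near r x y) (h' : near s y z)
    (hrs : r + s ≤ t) : near t x z := by
  intro i
  have := abs_sub_le (x i) (y i) (z i)
  have h1 := h i
  have h2 := h' i
  omega

lemma near_neg {d : ℕ} (a : Fin d) {r : ℤ} (hr : r < 0) (x y : Fin d → ℤ) : ¬ near r x y := by
  intro h
  have := (abs_nonneg _).trans (h a)
  omega

lemma near_stp {d : ℕ} (x : Fin d → ℤ) (u : Fin d × Bool) : near 1 x (x + stp u) := by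
  intro i
  simp only [stp, Pi.add_apply, sub_add_cancel_left, abs_neg]
  by_cases h : i = u.1
  · subst h; simp; split_ifs <;> simp
  · simp [Pi.single_eq_of_ne h]

/-- iteration lemma -/
lemma iter_bound {d : ℕ} (g : (Fin d → ℤ) → ℝ) (T : (Fin d → ℤ) → Prop) (Lp : ℤ) (hLp : 0 ≤ Lp)
    (a ε : ℝ) (ha : 0 ≤ a) (hε : 0 ≤ ε) (hε2 : ε ≤ 1 / 2)
    (hT : ∀ x, T x → ∀ m : ℝ, 0 ≤ m → (∀ y, near Lp x y → g y ≤ m) → g x ≤ a + ε * m) :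
    ∀ (j : ℕ) (x : Fin d → ℤ) (m : ℝ), 0 ≤ m → (∀ y, near (j * Lp) x y → g y ≤ m) →
      (∀ y, near (j * Lp - Lp) x y → T y) → g x ≤ 2 * a + ε ^ j * m := by
  intro j
  induction j with
  | zero =>
    intro x m hm h _
    have := h x (near_self (by simp) x)
    simp only [pow_zero, one_mul]; linarith
  | succ j ih =>
    intro x m hm h hTy
    have hx : T x := hTy x (near_self (by push_cast; nlinarith) x)
    have key := hT x hx (2 * a + ε ^ j * m) (by positivity) (by
      intro y hy
      apply ih y m hm
      · intro w hw
        exact h w (near_trans hy hw (by push_cast; linarith))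
      · intro w hw
        exact hTy w (near_trans hy hw (by push_cast; linarith)))
    have : ε * (2 * a) ≤ a := by nlinarith
    calc g x ≤ a + ε * (2 * a + ε ^ j * m) := key
      _ = a + ε * (2 * a) + ε ^ (j + 1) * m := by ring
      _ ≤ _ := by linarith

/-- The a priori estimate defining a good box at scale `L` with decay exponent `e`. -/
def Good {d : ℕ} (γ E : ℝ) (v : (Fin d → ℤ) → ℝ) (L e : ℕ) (S : Finset (Fin d → ℤ))
    (x : Fin d → ℤ) : Prop :=
  ∀ (ψ : (Fin d → ℤ) → ℝ) (F m : ℝ), 0 ≤ F → 0 ≤ m →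
    (∀ y, y ∉ S → near L x y → ψ y = 0) → (∀ y ∈ S, |Aop γ E v ψ y| ≤ F) →
    (∀ y, near (L + 1) x y → |ψ y| ≤ m) → |ψ x| ≤ F / γ ^ L + γ ^ e * m

/-- admissible rectangles -/
def Adm {d : ℕ} (a : Fin d) (L : ℕ) (x lo hi : Fin d → ℤ) : Prop :=
  (∀ i, lo i ≤ x i ∧ x i ≤ hi i ∧ x i - L ≤ lo i ∧ hi i ≤ x i + L) ∧ lo a + L ≤ hi a

/-- all admissible sub-rectangles of `R` centred at `x` are good. -/
def AllGood {d : ℕ} (γ E : ℝ) (v : (Fin d → ℤ) → ℝ) (a : Fin d) (L e : ℕ)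
    (R : Finset (Fin d → ℤ)) (x : Fin d → ℤ) : Prop :=
  ∀ lo hi : Fin d → ℤ, Adm a L x lo hi → Finset.Icc lo hi ⊆ R → Good γ E v L e (Finset.Icc lo hi) x

/-- non-resonance of `U` with exponent `n`. -/
def NonRes {d : ℕ} (γ E : ℝ) (v : (Fin d → ℤ) → ℝ) (n : ℕ) (U : Finset (Fin d → ℤ)) : Prop :=
  ∀ (φ : (Fin d → ℤ) → ℝ) (F : ℝ), 0 ≤ F → (∀ y, y ∉ U → φ y = 0) →
    (∀ y ∈ U, |Aop γ E v φ y| ≤ F) → ∀ x, |φ x| ≤ F / γ ^ n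

lemma mem_Icc_pi {d : ℕ} {lo hi x : Fin d → ℤ} :
    x ∈ Finset.Icc lo hi ↔ ∀ i, lo i ≤ x i ∧ x i ≤ hi i := by
  rw [Finset.mem_Icc, Pi.le_def, Pi.le_def]
  exact ⟨fun h i => ⟨h.1 i, h.2 i⟩, fun h => ⟨fun i => (h i).1, fun i => (h i).2⟩⟩

/-- one-step estimate at a good point of a rectangle `U ⊆ R`. -/
lemma good_step {d : ℕ} {γ E : ℝ} {v : (Fin d → ℤ) → ℝ} {a : Fin d} {L e : ℕ}
    {lo hi : Fin d → ℤ} (hside : lo a + L ≤ hi a) {R : Finset (Fin d → ℤ)}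
    (hR : Finset.Icc lo hi ⊆ R) {x : Fin d → ℤ} (hx : x ∈ Finset.Icc lo hi)
    (hg : AllGood γ E v a L e R x)
    (ψ : (Fin d → ℤ) → ℝ) {F m : ℝ} (hF : 0 ≤ F) (hm : 0 ≤ m)
    (h0 : ∀ y, y ∉ Finset.Icc lo hi → near L x y → ψ y = 0)
    (hA : ∀ y ∈ Finset.Icc lo hi, |Aop γ E v ψ y| ≤ F)
    (hb : ∀ y, near (L + 1) x y → |ψ y| ≤ m) : |ψ x| ≤ F / γ ^ L + γ ^ e * m := by
  have hx' := mem_Icc_pi.1 hx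
  refine hg (fun i => max (lo i) (x i - L)) (fun i => min (hi i) (x i + L)) ?_ ?_ ψ F m hF hm
    ?_ ?_ hb
  · constructor
    · intro i
      have := hx' i
      try simp only
      omega
    · have := hx' a
      try simp only
      omega
  · intro y hy
    apply hR
    rw [mem_Icc_pi] at hy ⊢
    intro i
    have := hy i
    try simp only at this
    omega
  · intro y hy hn
    apply h0 y _ hn
    intro hc
    apply hy
    rw [mem_Icc_pi] at hc ⊢
    intro i
    have h1 := hc i
    have h2 := abs_le.1 (hn i)
    try simp only
    omega
  · intro y hy
    apply hA
    rw [mem_Icc_pi] at hy ⊢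
    intro i
    have := hy i
    try simp only at this
    omega

/-! ### The deterministic step -/

lemma abs_sum_stp_le {d : ℕ} (f : Fin d × Bool → ℝ) (m : ℝ) (h : ∀ u, |f u| ≤ m) :
    |∑ u, f u| ≤ 2 * d * m := by
  calc |∑ u, f u| ≤ ∑ u, |f u| := Finset.abs_sum_le_sum_abs _ _
    _ ≤ ∑ _u : Fin d × Bool, m := Finset.sum_le_sum fun u _ => h u
    _ = 2 * d * m := by
      rw [Finset.sum_const, nsmul_eq_mul, Finset.card_univ, Fintype.card_prod]; simp; ring_nf; simp

lemma Aop_sub {d : ℕ} (γ E : ℝ) (v ψ φ : (Fin d → ℤ) → ℝ) (x : Fin d → ℤ) (hx : φ x = ψ x) :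
    Aop γ E v φ x = Aop γ E v ψ x + γ * ∑ u : Fin d × Bool, (ψ (x + stp u) - φ (x + stp u)) := by
  simp only [Aop, hx, Finset.sum_sub_distrib]; ring

set_option maxHeartbeats 2000000 in
lemma det_step {d : ℕ} {γ E : ℝ} {v : (Fin d → ℤ) → ℝ} {a : Fin d} {L e M : ℕ}
    (hM : 1000 ≤ M) (hML : M ≤ L) (hLe : L ≤ 2 * e)
    {lo hi z b : Fin d → ℤ} (hγ : 0 < γ) (hγd : 8 * d * γ ≤ 1)
    (hAdm : Adm a (M * L) z lo hi)
    (hgood : ∀ x ∈ Finset.Icc lo hi, ¬ near (2 * L) b x → AllGood γ E v a L e (Finset.Icc lo hi) x)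
    (U : Finset (Fin d → ℤ)) (hU : ∀ x, x ∈ U ↔ x ∈ Finset.Icc lo hi ∧ near (24 * L) b x)
    (hNR : NonRes γ E v (7 * L) U) :
    Good γ E v (M * L) (e * (M - 60)) (Finset.Icc lo hi) z := by
  classical
  intro ψ F m hF hm h0 hA hb
  have hd1 : (1 : ℝ) ≤ d := by
    have : 1 ≤ d := by have := a.2; omega
    exact_mod_cast this
  have hγ8 : γ ≤ 1 / 8 := by nlinarith
  have hγ1 : γ ≤ 1 := by linarith
  set ε := γ ^ e with hε
  have hε0 : 0 < ε := by positivity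
  have hε2 : ε ≤ 1 / 2 := by
    have : γ ^ e ≤ γ ^ 1 := pow_le_pow_of_le_one hγ.le hγ1 (by omega)
    rw [pow_one] at this; linarith
  have hε1 : ε ≤ 1 := by linarith
  set a0 := F / γ ^ L with ha0
  set a' := F / γ ^ (9 * L) with ha'
  have ha0n : 0 ≤ a0 := by positivity
  have ha'n : 0 ≤ a' := by positivity
  have ha0a' : a0 ≤ a' := by
    apply div_le_div_of_nonneg_left hF (by positivity)
    exact pow_le_pow_of_le_one hγ.le hγ1 (by omega)
  have hMZ : (1000 : ℤ) ≤ M := by exact_mod_cast hM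
  have hMLZ : (M : ℤ) ≤ L := by exact_mod_cast hML
  have hPge : (1000 : ℤ) * L ≤ M * L := by nlinarith
  have hPc : ((M * L : ℕ) : ℤ) = (M : ℤ) * L := by push_cast; ring
  have hside : lo a + L ≤ hi a := by
    have := hAdm.2
    rw [hPc] at this
    linarith
  rw [hPc] at h0 hb
  -- one good step
  have T1 : ∀ x, near ((M : ℤ) * L - L) z x → ¬ near (2 * L) b x → ∀ m' : ℝ, 0 ≤ m' →
      (∀ y, near (L + 1) x y → |ψ y| ≤ m') → |ψ x| ≤ a0 + ε * m' := by
    intro x hzx hbx m' hm' hy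
    by_cases hxR : x ∈ Finset.Icc lo hi
    · exact good_step hside (Finset.Subset.refl _) hxR (hgood x hxR hbx) ψ hF hm'
        (fun y hyR hxy => h0 y hyR (near_trans hzx hxy (by linarith))) hA hy
    · rw [h0 x hxR (near_mono hzx (by linarith)), abs_zero]
      positivity
  by_cases hfar : near ((M : ℤ) * L - 58 * L - 1) z b
  swap
  · -- case A
    have := iter_bound (fun x => |ψ x|) (fun x => near ((M : ℤ) * L - L) z x ∧ ¬ near (2 * L) b x)
      (L + 1) (by positivity) a0 ε ha0n hε0.le hε2 (fun x hx m' hm' hy => T1 x hx.1 hx.2 m' hm' hy)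
      (M - 60) z m hm (fun y hy => hb y (near_mono hy (by
        rw [Nat.cast_sub (by omega)]; push_cast; linarith))) (by
        intro y hy
        rw [Nat.cast_sub (by omega)] at hy
        push_cast at hy
        refine ⟨near_mono hy (by linarith), fun hc => hfar ?_⟩
        exact near_trans hy (near_symm hc) (by linarith))
    try simp only at this
    refine this.trans ?_
    rw [← pow_mul]
    have h2 : 2 * a0 ≤ F / γ ^ (M * L) := by
      rw [ha0, ← mul_div_assoc, div_le_div_iff₀ (by positivity) (by positivity)]
      have : γ ^ (M * L) ≤ γ ^ (L + 1) := pow_le_pow_of_le_one hγ.le hγ1 (by nlinarith)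
      rw [pow_succ] at this
      have h3 : 0 < γ ^ L := by positivity
      have : 2 * γ ^ (M * L) ≤ γ ^ L := by nlinarith
      nlinarith
    linarith
  · -- case B
    have hex : ∃ r : ℕ, near (r : ℤ) z b := by
      refine ⟨((M : ℤ) * L - 58 * L - 1).toNat, near_mono hfar (Int.self_le_toNat _)⟩
    set r0 := Nat.find hex with hr0
    have hr0n : near (r0 : ℤ) z b := Nat.find_spec hex
    have hr0min : ∀ r : ℤ, near r z b → (r0 : ℤ) ≤ r := by
      intro r hr
      have hr' : 0 ≤ r := by
        by_contra hc
        exact near_neg a (by omega) z b hr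
      have h2 : near ((r.toNat : ℕ) : ℤ) z b := by rwa [Int.toNat_of_nonneg hr']
      have := Nat.find_min' hex h2
      omega
    have hr0le := hr0min _ hfar
    -- resonant step
    have T2 : ∀ x, near (2 * L) b x → ∀ m' : ℝ, 0 ≤ m' →
        (∀ y, near (50 * L) b y → |ψ y| ≤ m') → |ψ x| ≤ a' + ε * m' := by
      intro x hbx m' hm' hy
      set φ : (Fin d → ℤ) → ℝ := fun y => if y ∈ U then ψ y else 0 with hφ
      set mb := 2 * a0 + ε ^ 18 * m' with hmb
      have hmb0 : 0 ≤ mb := by positivity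
      have hbd : ∀ y ∈ U, ∀ u, |ψ (y + stp u) - φ (y + stp u)| ≤ mb := by
        intro y hyU u
        set w := y + stp u with hw
        have hyU' := (hU y).1 hyU
        have hwb : near (24 * L + 1) b w := near_trans hyU'.2 (near_stp y u) le_rfl
        by_cases hwU : w ∈ U
        · simp only [hφ, if_pos hwU, sub_self, abs_zero]; exact hmb0
        · simp only [hφ, if_neg hwU, sub_zero]
          have hzw : near (r0 + (24 * L + 1)) z w := near_trans hr0n hwb le_rfl
          by_cases hwR : w ∈ Finset.Icc lo hi
          · have hwn : ¬ near (24 * L) b w := fun hc => hwU ((hU w).2 ⟨hwR, hc⟩)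
            have := iter_bound (fun x => |ψ x|)
              (fun x => near ((M : ℤ) * L - L) z x ∧ ¬ near (2 * L) b x)
              (L + 1) (by positivity) a0 ε ha0n hε0.le hε2
              (fun x hx m' hm' hy => T1 x hx.1 hx.2 m' hm' hy)
              18 w m' hm' (fun y hy' => hy y (near_trans hwb hy' (by push_cast; linarith))) (by
                intro y hy
                push_cast at hy
                refine ⟨near_trans hzw hy (by linarith), fun hc => hwn ?_⟩
                exact near_trans hc (near_symm hy) (by linarith))
            exact this
          · rw [h0 w hwR (near_mono hzw (by linarith)), abs_zero]; exact hmb0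
      have hF1 : ∀ y ∈ U, |Aop γ E v φ y| ≤ F + γ * (2 * d * mb) := by
        intro y hyU
        rw [Aop_sub γ E v ψ φ y (by simp [hφ, hyU])]
        refine (abs_add_le _ _).trans ?_
        have h1 := hA y ((hU y).1 hyU).1
        have h2 := abs_sum_stp_le (fun u => ψ (y + stp u) - φ (y + stp u)) mb (hbd y hyU)
        rw [abs_mul, abs_of_pos hγ]
        have := mul_le_mul_of_nonneg_left h2 hγ.le
        linarith
      have key := hNR φ (F + γ * (2 * d * mb)) (by positivity)
        (fun y hy => by simp [hφ, hy]) hF1 x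
      by_cases hxU : x ∈ U
      · simp only [hφ, if_pos hxU] at key
        refine key.trans ?_
        rw [div_le_iff₀ (by positivity)]
        have hdg : γ * (2 * d * mb) ≤ mb / 4 := by
          nlinarith
        have e1 : a0 * γ ^ L = F := by rw [ha0]; field_simp
        have e2 : a' * γ ^ (9 * L) = F := by rw [ha']; field_simp
        have e3 : γ ^ (9 * L) = γ ^ (7 * L) * γ ^ L * γ ^ L := by
          rw [← pow_add, ← pow_add]; congr 1; ring
        have e4 : ε ^ 18 ≤ ε * γ ^ (7 * L) := by
          rw [hε, ← pow_mul, ← pow_add]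
          exact pow_le_pow_of_le_one hγ.le hγ1 (by omega)
        have hgl : γ ^ L ≤ 1 / 8 := by
          have : γ ^ L ≤ γ ^ 1 := pow_le_pow_of_le_one hγ.le hγ1 (by omega)
          rw [pow_one] at this; linarith
        have hgl0 : 0 < γ ^ L := by positivity
        have hg7 : 0 < γ ^ (7 * L) := by positivity
        have e5 : a0 = a' * γ ^ (7 * L) * γ ^ L := by
          have : a0 * γ ^ L = (a' * γ ^ (7 * L) * γ ^ L) * γ ^ L := by
            rw [e1, ← e2, e3]; ring
          exact mul_right_cancel₀ hgl0.ne' this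
        have e6 : F = a' * γ ^ (7 * L) * γ ^ L * γ ^ L := by rw [← e2, e3]; ring
        have hX : 0 ≤ a' * γ ^ (7 * L) := by positivity
        set X := a' * γ ^ (7 * L) with hXd
        have h1 : X * γ ^ L ≤ X * (1 / 8) := mul_le_mul_of_nonneg_left hgl hX
        have h1' : 0 ≤ X * γ ^ L := by positivity
        have h2 : X * γ ^ L * γ ^ L ≤ X * γ ^ L := by nlinarith
        have h3 : ε ^ 18 * m' ≤ ε * γ ^ (7 * L) * m' := mul_le_mul_of_nonneg_right e4 hm'
        have h4 : 0 ≤ ε * γ ^ (7 * L) * m' := by positivity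
        have : (a' + ε * m') * γ ^ (7 * L) = X + ε * γ ^ (7 * L) * m' := by rw [hXd]; ring
        rw [this]
        have h5 : F = X * γ ^ L * γ ^ L := e6
        linarith
      · have hxR : x ∉ Finset.Icc lo hi := fun hc =>
          hxU ((hU x).2 ⟨hc, near_mono hbx (by linarith)⟩)
        rw [h0 x hxR (near_trans hr0n hbx (by linarith)), abs_zero]
        positivity
    -- second iteration
    have It : ∀ (j : ℕ) (r : ℤ), (r0 : ℤ) + 50 * L ≤ r → r + (j * (L + 1) : ℤ) ≤ M * L + 1 →
        ∀ m' : ℝ, 0 ≤ m' → (∀ y, near (r + j * (L + 1)) z y → |ψ y| ≤ m') →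
        ∀ x, near r z x → |ψ x| ≤ 2 * a' + ε ^ j * m' := by
      intro j
      induction j with
      | zero =>
        intro r _ _ m' hm' h x hx
        have := h x (near_mono hx (by simp))
        simp only [pow_zero, one_mul]; linarith
      | succ j ih =>
        intro r hr hr2 m' hm' h x hx
        push_cast at hr2
        have hjn : (0 : ℤ) ≤ j * (L + 1) := by positivity
        have ih' := ih (r + (L + 1)) (by linarith) (by linarith) m' hm' (fun y hy => h y
          (near_mono hy (by push_cast; linarith)))
        have hm2 : 0 ≤ 2 * a' + ε ^ j * m' := by positivity
        have hstep : |ψ x| ≤ a' + ε * (2 * a' + ε ^ j * m') := by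
          by_cases hbx : near (2 * L) b x
          · exact T2 x hbx _ hm2 (fun y hy => ih' y (near_trans hr0n hy (by linarith)))
          · have := T1 x (near_mono hx (by linarith)) hbx _ hm2
              (fun y hy => ih' y (near_trans hx hy (by linarith)))
            linarith
        have : ε * (2 * a') ≤ a' := by nlinarith
        calc |ψ x| ≤ a' + ε * (2 * a' + ε ^ j * m') := hstep
          _ = a' + ε * (2 * a') + ε ^ (j + 1) * m' := by ring
          _ ≤ _ := by linarith
    -- combine
    set i := (r0 - 2 * L) / (L + 1) with hi'
    have hi1 : (i : ℤ) * (L + 1) ≤ (r0 - 2 * L : ℕ) := by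
      have := Nat.div_mul_le_self (r0 - 2 * L) (L + 1)
      exact_mod_cast this
    have hi2 : (r0 : ℤ) - 2 * L < i * (L + 1) + (L + 1) := by
      have := Nat.lt_div_mul_add (a := r0 - 2 * L) (b := L + 1) (by omega)
      have h3 : ((r0 - 2 * L : ℕ) : ℤ) < i * (L + 1) + (L + 1) := by
        rw [hi']; exact_mod_cast this
      omega
    have hi3 : (i : ℤ) * (L + 1) ≤ M * L - 60 * L := by
      have : (0 : ℤ) ≤ M * L - 60 * L := by linarith
      omega
    have hiM : i ≤ M - 60 := by
      by_contra hc
      have : (M : ℤ) - 60 + 1 ≤ i := by omega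
      nlinarith
    have hr0pos : (0 : ℤ) ≤ r0 := by positivity
    obtain ⟨j, hj⟩ : ∃ j, i + j = M - 60 := ⟨M - 60 - i, by omega⟩
    have hjZ : (j : ℤ) = M - 60 - i := by omega
    have I2 := It j (r0 + 50 * L) le_rfl (by rw [hjZ]; linarith) m hm
      (fun y hy => hb y (near_mono hy (by rw [hjZ]; linarith)))
    have hm2 : 0 ≤ 2 * a' + ε ^ j * m := by positivity
    have I1 := iter_bound (fun x => |ψ x|)
      (fun x => near ((M : ℤ) * L - L) z x ∧ ¬ near (2 * L) b x)
      (L + 1) (by positivity) a0 ε ha0n hε0.le hε2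
      (fun x hx m' hm' hy => T1 x hx.1 hx.2 m' hm' hy)
      i z _ hm2 (fun y hy => I2 y (near_mono hy (by omega))) (by
        intro y hy
        rcases Nat.eq_zero_or_pos i with h | h
        · exfalso
          rw [h] at hy
          exact near_neg a (by push_cast; omega) z y hy
        · have hi4 : (i : ℤ) * (L + 1) ≤ r0 - 2 * L := by
            have : (1 : ℤ) ≤ i := by exact_mod_cast h
            have : (L : ℤ) + 1 ≤ i * (L + 1) := by nlinarith
            omega
          refine ⟨near_mono hy (by linarith), fun hc => ?_⟩
          have := hr0min _ (near_trans hy (near_symm hc) le_rfl)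
          linarith)
    try simp only at I1
    have hεi : ε ^ i ≤ 1 := pow_le_one₀ hε0.le hε1
    have h6 : ε ^ i * (2 * a') ≤ 2 * a' := by nlinarith
    have h7 : γ ^ (e * (M - 60)) = ε ^ i * ε ^ j := by
      rw [hε, ← pow_add, hj, ← pow_mul]
    have h8 : 4 * a' ≤ F / γ ^ (M * L) := by
      rw [ha', ← mul_div_assoc, div_le_div_iff₀ (by positivity) (by positivity)]
      have : γ ^ (M * L) ≤ γ ^ (9 * L + 1) := pow_le_pow_of_le_one hγ.le hγ1 (by nlinarith)
      rw [pow_succ] at this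
      have h3 : 0 < γ ^ (9 * L) := by positivity
      have : 4 * γ ^ (M * L) ≤ γ ^ (9 * L) := by nlinarith
      nlinarith
    rw [h7]
    calc |ψ z| ≤ 2 * a0 + ε ^ i * (2 * a' + ε ^ j * m) := I1
      _ = 2 * a0 + ε ^ i * (2 * a') + ε ^ i * ε ^ j * m := by ring
      _ ≤ _ := by linarith

/-! ### The deterministic part of the Wegner estimate -/

lemma Aop_smul {d : ℕ} (γ E : ℝ) (v φ : (Fin d → ℤ) → ℝ) (c : ℝ) (x : Fin d → ℤ) :
    Aop γ E v (fun y => c * φ y) x = c * Aop γ E v φ x := by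
  simp only [Aop, ← Finset.mul_sum]; ring

/-- a resonant set carries a normalized approximate eigenfunction. -/
lemma exists_normalized {d : ℕ} {γ E : ℝ} {v : (Fin d → ℤ) → ℝ} {n : ℕ}
    {U : Finset (Fin d → ℤ)} (hγ : 0 < γ) (h : ¬ NonRes γ E v n U) :
    ∃ φ : (Fin d → ℤ) → ℝ, (∀ y, y ∉ U → φ y = 0) ∧ (∀ y, |φ y| ≤ 1) ∧
      (∀ y ∈ U, |Aop γ E v φ y| ≤ γ ^ n) ∧ ∃ y ∈ U, |φ y| = 1 := by
  simp only [NonRes] at h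
  push Not at h
  obtain ⟨φ, F, hF, h0, hA, x, hx⟩ := h
  have hx0 : 0 < |φ x| := lt_of_le_of_lt (by positivity) hx
  have hxU : x ∈ U := by
    by_contra hc
    rw [h0 x hc] at hx0; simp at hx0
  obtain ⟨y1, hy1, hmax⟩ := Finset.exists_max_image U (fun y => |φ y|) ⟨x, hxU⟩
  set μ := |φ y1| with hμ
  have hμx : |φ x| ≤ μ := hmax x hxU
  have hμ0 : 0 < μ := lt_of_lt_of_le hx0 hμx
  refine ⟨fun y => μ⁻¹ * φ y, ?_, ?_, ?_, y1, hy1, ?_⟩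
  · intro y hy; simp [h0 y hy]
  · intro y
    rw [abs_mul, abs_of_pos (inv_pos.2 hμ0)]
    by_cases hy : y ∈ U
    · rw [inv_mul_le_iff₀ hμ0, mul_one]; exact hmax y hy
    · rw [h0 y hy]; simp
  · intro y hy
    rw [Aop_smul, abs_mul, abs_of_pos (inv_pos.2 hμ0), inv_mul_le_iff₀ hμ0]
    have : F < |φ x| * γ ^ n := by rwa [div_lt_iff₀ (by positivity)] at hx
    have h2 : |φ x| * γ ^ n ≤ μ * γ ^ n := mul_le_mul_of_nonneg_right hμx (by positivity)
    linarith [hA y hy]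
  · rw [abs_mul, abs_of_pos (inv_pos.2 hμ0), inv_mul_cancel₀ (ne_of_gt hμ0)]

/-- one step of a path -/
def adv {d : ℕ} (a : Fin d) (σ : Bool) (o : Option (Fin d × Bool)) : Fin d → ℤ :=
  stp (a, σ) + o.elim 0 stp

/-- the path with the given code -/
def pth {d : ℕ} (a : Fin d) (σ : Bool) (y : Fin d → ℤ) (c : ℕ → Option (Fin d × Bool)) :
    ℕ → Fin d → ℤ
  | 0 => y
  | i + 1 => pth a σ y c i + adv a σ (c i)

/-- sign -/
def sg (σ : Bool) : ℤ := if σ then 1 else -1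

lemma stp_back {d : ℕ} (a : Fin d) (σ : Bool) (x : Fin d → ℤ) :
    x + stp (a, σ) + stp (a, !σ) = x := by
  have : stp (a, σ) + stp (a, !σ) = 0 := by
    funext i
    by_cases h : i = a
    · subst h; cases σ <;> simp [stp]
    · cases σ <;> simp [stp, Pi.single_eq_of_ne h]
  rw [add_assoc, this, add_zero]

lemma adv_none {d : ℕ} (a : Fin d) (σ : Bool) : sg σ * adv a σ none a = 1 := by
  cases σ <;> simp [sg, adv, stp]

lemma adv_some {d : ℕ} (a : Fin d) (σ : Bool) (u : Fin d × Bool) (hu : u ≠ (a, !σ)) :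
    1 ≤ sg σ * adv a σ (some u) a := by
  obtain ⟨i, τ⟩ := u
  by_cases h : a = i
  · subst h
    cases σ <;> cases τ <;> simp [sg, adv, stp] at hu ⊢
  · cases σ <;> cases τ <;> simp [sg, adv, stp, Pi.single_eq_of_ne h]

/-- unique continuation step -/
lemma uc_step {d : ℕ} {γ E : ℝ} {v φ : (Fin d → ℤ) → ℝ} {a : Fin d} {σ : Bool}
    (hγ : 0 < γ) (hγd : 8 * d * γ ≤ 1) {x : Fin d → ℤ} (hx : 0 < |φ x|)
    (hW : |2 * d * γ + v (x + stp (a, σ)) - E| ≤ 2)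
    (hA : |Aop γ E v φ (x + stp (a, σ))| ≤ γ ^ 2 * |φ x|) :
    ∃ o, 1 ≤ sg σ * adv a σ o a ∧ γ ^ 2 * |φ x| ≤ |φ (x + adv a σ o)| := by
  classical
  have hd1 : (1 : ℝ) ≤ d := by
    have : 1 ≤ d := by have := a.2; omega
    exact_mod_cast this
  have hγ8 : γ ≤ 1 / 8 := by nlinarith
  by_contra hc
  push Not at hc
  set z := x + stp (a, σ) with hz
  have hz1 : |φ z| < γ ^ 2 * |φ x| := by
    have := hc none (adv_none a σ).ge
    simpa [adv] using this
  have hu : ∀ u, u ≠ (a, !σ) → |φ (z + stp u)| < γ ^ 2 * |φ x| := by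
    intro u hu
    have := hc (some u) (adv_some a σ u hu)
    simpa [adv, hz, add_assoc] using this
  have hsum : ∑ u : Fin d × Bool, φ (z + stp u) =
      φ x + ∑ u ∈ Finset.univ.erase (a, !σ), φ (z + stp u) := by
    rw [← Finset.add_sum_erase _ _ (Finset.mem_univ (a, !σ)), hz, stp_back]
  have hS : |∑ u ∈ Finset.univ.erase (a, !σ), φ (z + stp u)| ≤ 2 * d * (γ ^ 2 * |φ x|) := by
    calc |∑ u ∈ Finset.univ.erase (a, !σ), φ (z + stp u)|
        ≤ ∑ u ∈ Finset.univ.erase (a, !σ), |φ (z + stp u)| := Finset.abs_sum_le_sum_abs _ _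
      _ ≤ ∑ u ∈ Finset.univ.erase (a, !σ), γ ^ 2 * |φ x| := Finset.sum_le_sum fun u hu' =>
          (hu u (Finset.ne_of_mem_erase hu')).le
      _ ≤ ∑ _u : Fin d × Bool, γ ^ 2 * |φ x| := Finset.sum_le_sum_of_subset_of_nonneg
          (Finset.erase_subset _ _) (fun _ _ _ => by positivity)
      _ = 2 * d * (γ ^ 2 * |φ x|) := by
        rw [Finset.sum_const, nsmul_eq_mul, Finset.card_univ, Fintype.card_prod]; simp; ring_nf
        simp
  set S := ∑ u ∈ Finset.univ.erase (a, !σ), φ (z + stp u) with hSd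
  have hAe : Aop γ E v φ z = (2 * d * γ + v z - E) * φ z - γ * (φ x + S) := by
    simp only [Aop, hsum]
  set W := 2 * d * γ + v z - E
  have h1 : γ * φ x = W * φ z - γ * S - Aop γ E v φ z := by rw [hAe]; ring
  have h2 : γ * |φ x| ≤ |W| * |φ z| + γ * |S| + |Aop γ E v φ z| := by
    have := congrArg abs h1
    rw [abs_mul, abs_of_pos hγ] at this
    rw [this]
    have t1 := abs_sub (W * φ z - γ * S) (Aop γ E v φ z)
    have t2 := abs_sub (W * φ z) (γ * S)
    rw [abs_mul] at t2
    rw [abs_mul γ S, abs_of_pos hγ] at t2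
    linarith
  have h3 : |W| * |φ z| ≤ 2 * (γ ^ 2 * |φ x|) :=
    mul_le_mul hW hz1.le (abs_nonneg _) (by norm_num)
  have h4 : γ * |S| ≤ γ * (2 * d * (γ ^ 2 * |φ x|)) := mul_le_mul_of_nonneg_left hS hγ.le
  have h5 : γ * |φ x| ≤ (γ * |φ x|) * (3 * γ + (2 * d * γ) * γ) := by
    calc γ * |φ x| ≤ _ := h2
      _ ≤ 2 * (γ ^ 2 * |φ x|) + γ * (2 * d * (γ ^ 2 * |φ x|)) + γ ^ 2 * |φ x| := by linarith
      _ = _ := by ring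
  have h6 : 3 * γ + (2 * d * γ) * γ < 1 := by nlinarith
  have h7 : 0 < γ * |φ x| := by positivity
  nlinarith

/-- The record event -/
def WegEv {d : ℕ} (γ E : ℝ) (v : (Fin d → ℤ) → ℝ) (L : ℕ) (U : Finset (Fin d → ℤ))
    (p : ℕ → Fin d → ℤ) : Prop :=
  (∀ r ≤ L, p r ∈ U) ∧ (∀ r s, r ≤ L → s ≤ L → p r = p s → r = s) ∧
  ∃ φ : (Fin d → ℤ) → ℝ, (∀ y, y ∉ U → φ y = 0) ∧ (∀ y, |φ y| ≤ 1) ∧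
    (∀ y ∈ U, |Aop γ E v φ y| ≤ γ ^ (7 * L)) ∧
    ∀ r ≤ L, γ ^ (3 * r + 2) ≤ |φ (p r)| ∧ |φ (p r)| ≤ γ ^ (3 * r)

/-- Codes for record sites. -/
abbrev Code (d T : ℕ) : Type := Bool × (Fin T → Option (Fin d × Bool)) × Finset (Fin (T + 1))

/-- decoding -/
def dec {d T : ℕ} (a : Fin d) (y : Fin d → ℤ) (c : Code d T) (r : ℕ) : Fin d → ℤ :=
  pth a c.1 y (fun i => if h : i < T then c.2.1 ⟨i, h⟩ else none)
    (Nat.nth (fun i => ∃ h : i < T + 1, (⟨i, h⟩ : Fin (T + 1)) ∈ c.2.2) r)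

lemma pth_congr {d : ℕ} (a : Fin d) (σ : Bool) (y : Fin d → ℤ) (c c' : ℕ → Option (Fin d × Bool))
    (n : ℕ) (h : ∀ i < n, c i = c' i) : pth a σ y c n = pth a σ y c' n := by
  induction n with
  | zero => rfl
  | succ n ih =>
    simp only [pth]
    rw [ih (fun i hi => h i (by omega)), h n (by omega)]

lemma nth_of_strictMono (L : ℕ) (ir : ℕ → ℕ) (h : ∀ r s, r < s → s ≤ L → ir r < ir s)
    (r : ℕ) (hr : r ≤ L) : Nat.nth (fun i => ∃ s ≤ L, ir s = i) r = ir r := by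
  classical
  have hc : Nat.count (fun i => ∃ s ≤ L, ir s = i) (ir r) = r := by
    rw [Nat.count_eq_card_filter_range]
    have : (Finset.range (ir r)).filter (fun i => ∃ s ≤ L, ir s = i) = (Finset.range r).image ir := by
      ext i
      simp only [Finset.mem_filter, Finset.mem_range, Finset.mem_image]
      constructor
      · rintro ⟨h1, s, hs, rfl⟩
        refine ⟨s, ?_, rfl⟩
        by_contra hc
        rcases Nat.lt_or_ge r s with h2 | h2
        · have := h r s h2 hs; omega
        · have : s = r := by omega
          subst this; omega
      · rintro ⟨s, hs, rfl⟩
        exact ⟨h s r hs hr, s, by omega, rfl⟩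
    rw [this, Finset.card_image_of_injOn, Finset.card_range]
    intro s hs t ht hst
    simp only [Finset.coe_range, Set.mem_Iio] at hs ht
    rcases Nat.lt_trichotomy s t with h2 | h2 | h2
    · have := h s t h2 (by omega); omega
    · exact h2
    · have := h t s h2 (by omega); omega
  have := Nat.nth_count (p := fun i => ∃ s ≤ L, ir s = i) (n := ir r) ⟨r, hr, rfl⟩
  rw [hc] at this
  exact this

set_option maxHeartbeats 1000000 in
lemma wegner_det {d : ℕ} {γ E : ℝ} {v : (Fin d → ℤ) → ℝ} {a : Fin d} {L e : ℕ}
    (hL : 1000 ≤ L) (hLe : L ≤ 2 * e)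
    {lo hi b : Fin d → ℤ} (hγ : 0 < γ) (hγd : 8 * d * γ ≤ 1)
    (hv : ∀ x, 0 ≤ v x ∧ v x ≤ 1)
    (hside : lo a + 48 * L ≤ hi a) (hbR : b ∈ Finset.Icc lo hi)
    (hgood : ∀ x ∈ Finset.Icc lo hi, ¬ near (2 * L) b x → AllGood γ E v a L e (Finset.Icc lo hi) x)
    (U : Finset (Fin d → ℤ)) (hU : ∀ x, x ∈ U ↔ x ∈ Finset.Icc lo hi ∧ near (24 * L) b x)
    (hNR : ¬ NonRes γ E v (7 * L) U) :
    ∃ y ∈ U, ∃ c : Code d (19 * L), WegEv γ E v L U (dec a y c) := by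
  classical
  obtain ⟨φ, h0, h1, hA, y1, hy1, hy1e⟩ := exists_normalized hγ hNR
  have hd1 : (1 : ℝ) ≤ d := by
    have : 1 ≤ d := by have := a.2; omega
    exact_mod_cast this
  have hγ8 : γ ≤ 1 / 8 := by nlinarith
  have hγ1 : γ ≤ 1 := by linarith
  have hLZ : (1000 : ℤ) ≤ L := by exact_mod_cast hL
  have hbR' := mem_Icc_pi.1 hbR
  have hpl : ∀ m n : ℕ, m ≤ n → γ ^ n ≤ γ ^ m := fun m n h =>
    pow_le_pow_of_le_one hγ.le hγ1 h
  -- U is a rectangle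
  have hUI : U = Finset.Icc (fun i => max (lo i) (b i - 24 * L)) (fun i => min (hi i) (b i + 24 * L)) := by
    ext x
    rw [hU, mem_Icc_pi, mem_Icc_pi]
    constructor
    · rintro ⟨ha, hb⟩ i
      have := ha i
      have := abs_le.1 (hb i)
      try simp only
      omega
    · intro h
      refine ⟨fun i => ?_, fun i => ?_⟩
      · have := h i
        try simp only at this
        omega
      · have := h i
        try simp only at this
        rw [abs_le]; omega
  -- decay
  have hε2 : γ ^ e ≤ 1 / 2 := by
    have : γ ^ e ≤ γ ^ 1 := hpl _ _ (by omega)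
    rw [pow_one] at this; linarith
  have hdecay : ∀ x, γ ^ (3 * L) < |φ x| → near (9 * L + 7) b x := by
    intro x hx
    by_contra hfar
    have key := iter_bound (fun x => |φ x|) (fun x => ¬ near (2 * L) b x)
      (L + 1) (by positivity) (γ ^ (7 * L) / γ ^ L) (γ ^ e) (by positivity) (by positivity) hε2 (by
        intro x hx m hm hy
        by_cases hxU : x ∈ U
        · have hxU' := (hU x).1 hxU
          rw [hUI] at hxU h0 hA
          refine good_step (lo := (fun i => max (lo i) (b i - 24 * L)))
            (hi := (fun i => min (hi i) (b i + 24 * L))) ?_ ?_ hxU (hgood x hxU'.1 hx) φ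
            (by positivity) hm (fun y hy _ => h0 y hy) hA hy
          · have := hbR' a
            try simp only
            omega
          · rw [← hUI]; exact fun y hy => ((hU y).1 hy).1
        · try simp only
          rw [h0 x hxU, abs_zero]; positivity)
      8 x 1 (by norm_num) (fun y _ => h1 y) (by
        intro y hy hc
        apply hfar
        push_cast at hy
        exact near_trans hc (near_symm hy) (by linarith))
    try simp only at key
    have e1 : γ ^ (7 * L) / γ ^ L = γ ^ (6 * L) := by
      rw [div_eq_iff (by positivity), ← pow_add]; congr 1; ring
    rw [e1, mul_one, ← pow_mul] at key
    have e2 : γ ^ (6 * L) ≤ γ ^ (3 * L + 1) := hpl _ _ (by omega)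
    have e3 : γ ^ (e * 8) ≤ γ ^ (3 * L + 1) := hpl _ _ (by omega)
    rw [pow_succ] at e2 e3
    have : 0 < γ ^ (3 * L) := by positivity
    nlinarith
  have hg3L : γ ^ (3 * L) < 1 := by
    have : γ ^ (3 * L) ≤ γ ^ 1 := hpl _ _ (by omega)
    rw [pow_one] at this; linarith
  have hmemU : ∀ x, 0 < |φ x| → x ∈ U := by
    intro x hx
    by_contra hc
    rw [h0 x hc] at hx; simp at hx
  -- bound on the diagonal
  have hW1 : |2 * d * γ + v y1 - E| ≤ 1 := by
    have h2 := hA y1 hy1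
    have h3 := abs_sum_stp_le (fun u => φ (y1 + stp u)) 1 (fun u => h1 _)
    have h4 : (2 * d * γ + v y1 - E) * φ y1 =
      Aop γ E v φ y1 + γ * ∑ u : Fin d × Bool, φ (y1 + stp u) := by simp only [Aop]; ring
    have h5 := congrArg abs h4
    rw [abs_mul, hy1e, mul_one] at h5
    rw [h5]
    refine (abs_add_le _ _).trans ?_
    rw [abs_mul, abs_of_pos hγ]
    have h6 : γ ^ (7 * L) ≤ γ ^ 1 := hpl _ _ (by omega)
    have h7 := mul_le_mul_of_nonneg_left h3 hγ.le
    rw [pow_one] at h6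
    nlinarith
  have hW : ∀ z, |2 * d * γ + v z - E| ≤ 2 := by
    intro z
    have := abs_le.1 hW1
    have h2 := hv z
    have h3 := hv y1
    rw [abs_le]; constructor <;> linarith
  -- direction
  obtain ⟨σ, hσ⟩ : ∃ σ : Bool, ∀ x ∈ Finset.Icc lo hi, near (9 * L + 7) b x →
      x + stp (a, σ) ∈ U := by
    by_cases hdir : b a + 24 * L ≤ hi a
    · refine ⟨true, fun x hx hn => ?_⟩
      have hst : near (24 * L) b (x + stp (a, true)) := near_trans hn (near_stp x _) (by linarith)
      rw [hU]
      refine ⟨?_, hst⟩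
      rw [mem_Icc_pi] at hx ⊢
      intro i
      have h2 := hx i
      by_cases h : i = a
      · subst h
        have := abs_le.1 (hn i)
        simp [stp]; omega
      · simp [stp, Pi.single_eq_of_ne h]; omega
    · refine ⟨false, fun x hx hn => ?_⟩
      have hst : near (24 * L) b (x + stp (a, false)) := near_trans hn (near_stp x _) (by linarith)
      rw [hU]
      refine ⟨?_, hst⟩
      rw [mem_Icc_pi] at hx ⊢
      intro i
      have h2 := hx i
      by_cases h : i = a
      · subst h
        have := abs_le.1 (hn i)
        have := hbR' i
        simp [stp]; omega
      · simp [stp, Pi.single_eq_of_ne h]; omega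
  -- choose the path
  have hstep : ∀ x, ∃ o, 1 ≤ sg σ * adv a σ o a ∧
      (γ ^ (3 * L) < |φ x| → γ ^ 2 * |φ x| ≤ |φ (x + adv a σ o)|) := by
    intro x
    by_cases hx : γ ^ (3 * L) < |φ x|
    · have hx0 : 0 < |φ x| := lt_trans (by positivity) hx
      have hzU := hσ x ((hU x).1 (hmemU x hx0)).1 (hdecay x hx)
      obtain ⟨o, ho1, ho2⟩ := uc_step (a := a) (σ := σ) hγ hγd hx0 (hW _) (by
        refine (hA _ hzU).trans ?_
        have : γ ^ (7 * L) ≤ γ ^ (2 + 3 * L) := hpl _ _ (by omega)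
        rw [pow_add] at this
        have h3 : 0 < γ ^ 2 := by positivity
        nlinarith)
      exact ⟨o, ho1, fun _ => ho2⟩
    · exact ⟨none, (adv_none a σ).ge, fun h => absurd h hx⟩
  choose o ho1 ho2 using hstep
  let xs : ℕ → Fin d → ℤ := fun i => Nat.rec y1 (fun _ x => x + adv a σ (o x)) i
  have hxs0 : xs 0 = y1 := rfl
  have hxs1 : ∀ i, xs (i + 1) = xs i + adv a σ (o (xs i)) := fun i => rfl
  have hpth : ∀ i, pth a σ y1 (fun i => o (xs i)) i = xs i := by
    intro i
    induction i with
    | zero => rfl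
    | succ i ih => simp only [pth, ih, hxs1]
  have hmono : ∀ k i : ℕ, (k : ℤ) ≤ sg σ * (xs (i + k) a - xs i a) := by
    intro k
    induction k with
    | zero => intro i; simp
    | succ k ih =>
      intro i
      have h2 := ih i
      have h3 := ho1 (xs (i + k))
      rw [← add_assoc, hxs1, Pi.add_apply]
      push_cast
      linarith
  have hinj : ∀ i j, xs i = xs j → i = j := by
    intro i j hij
    rcases Nat.lt_trichotomy i j with h | h | h
    · obtain ⟨k, rfl⟩ := Nat.exists_eq_add_of_lt h
      have := hmono (k + 1) i
      rw [← add_assoc, ← hij] at this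
      simp at this; omega
    · exact h
    · obtain ⟨k, rfl⟩ := Nat.exists_eq_add_of_lt h
      have := hmono (k + 1) j
      rw [← add_assoc, hij] at this
      simp at this; omega
  have hreach : ∃ i ≤ 19 * L, |φ (xs i)| ≤ γ ^ (3 * L) := by
    by_contra hc
    push Not at hc
    have e1 := abs_le.1 (hdecay _ (hc 0 (by omega)) a)
    have e2 := abs_le.1 (hdecay _ (hc (19 * L) le_rfl) a)
    have e3 := hmono (19 * L) 0
    rw [zero_add] at e3
    push_cast at e3
    cases σ
    · simp only [sg] at e3
      norm_num at e3
      omega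
    · simp only [sg] at e3
      norm_num at e3
      omega
  obtain ⟨iT, hiT, hiT2⟩ := hreach
  have hex : ∀ r, r ≤ L → ∃ i, |φ (xs i)| ≤ γ ^ (3 * r) := fun r hr =>
    ⟨iT, hiT2.trans (hpl _ _ (by omega))⟩
  let ir : ℕ → ℕ := fun r => if h : r ≤ L then Nat.find (hex r h) else 0
  have hir1 : ∀ r, r ≤ L → |φ (xs (ir r))| ≤ γ ^ (3 * r) := by
    intro r hr
    simp only [ir, dif_pos hr]
    exact Nat.find_spec (hex r hr)
  have hirmin : ∀ r, r ≤ L → ∀ i, |φ (xs i)| ≤ γ ^ (3 * r) → ir r ≤ i := by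
    intro r hr i hi
    simp only [ir, dif_pos hr]
    exact Nat.find_min' (hex r hr) hi
  have hir2 : ∀ r, r ≤ L → γ ^ (3 * r + 2) ≤ |φ (xs (ir r))| := by
    intro r hr
    rcases Nat.eq_zero_or_pos (ir r) with h | h
    · rw [h, hxs0, hy1e]; exact pow_le_one₀ hγ.le hγ1
    · obtain ⟨k, hk⟩ := Nat.exists_eq_succ_of_ne_zero h.ne'
      have h2 : γ ^ (3 * r) < |φ (xs k)| := by
        by_contra hc
        push Not at hc
        have := hirmin r hr k hc
        omega
      have h3 := ho2 (xs k) (lt_of_le_of_lt (hpl _ _ (by omega)) h2)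
      rw [← hxs1] at h3
      rw [hk]
      refine le_trans ?_ h3
      rw [add_comm, pow_add]
      exact mul_le_mul_of_nonneg_left h2.le (by positivity)
  have hirT : ∀ r, r ≤ L → ir r ≤ 19 * L := fun r hr =>
    (hirmin r hr iT (hiT2.trans (hpl _ _ (by omega)))).trans hiT
  have hirmono : ∀ r s, r < s → s ≤ L → ir r < ir s := by
    intro r s hrs hs
    have h2 := hirmin r (by omega) (ir s) ((hir1 s hs).trans (hpl _ _ (by omega)))
    refine lt_of_le_of_ne h2 fun hc => ?_
    have h3 := hir2 r (by omega)
    rw [hc] at h3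
    have h4 := h3.trans (hir1 s hs)
    have h5 : γ ^ (3 * s) ≤ γ ^ (3 * r + 2) * γ := by
      rw [← pow_succ]; exact hpl _ _ (by omega)
    have : 0 < γ ^ (3 * r + 2) := by positivity
    nlinarith
  let c : Code d (19 * L) := (σ, fun i => o (xs i), Finset.univ.filter fun i => ∃ s ≤ L, ir s = i)
  have hdec : ∀ r ≤ L, dec a y1 c r = xs (ir r) := by
    intro r hr
    have hn : Nat.nth (fun i => ∃ h : i < 19 * L + 1, (⟨i, h⟩ : Fin (19 * L + 1)) ∈ c.2.2) r
        = ir r := by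
      rw [← nth_of_strictMono L ir hirmono r hr]
      congr 1
      funext i
      simp only [c, Finset.mem_filter, Finset.mem_univ, true_and, eq_iff_iff]
      constructor
      · rintro ⟨_, h⟩; exact h
      · rintro ⟨s, hs, rfl⟩
        exact ⟨by have := hirT s hs; omega, s, hs, rfl⟩
    simp only [dec]
    rw [hn, ← hpth]
    apply pth_congr
    intro i hi
    have : i < 19 * L := by have := hirT r hr; omega
    rw [dif_pos this]
  refine ⟨y1, hy1, c, ?_, ?_, φ, h0, h1, hA, ?_⟩
  · intro r hr
    rw [hdec r hr]
    exact hmemU _ (lt_of_lt_of_le (by positivity) (hir2 r hr))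
  · intro r s hr hs hrs
    rw [hdec r hr, hdec s hs] at hrs
    have := hinj _ _ hrs
    rcases Nat.lt_trichotomy r s with h | h | h
    · have := hirmono r s h hs; omega
    · exact h
    · have := hirmono s r h hr; omega
  · intro r hr
    rw [hdec r hr]
    exact ⟨hir2 r hr, hir1 r hr⟩

/-! ### Finite probability -/

section ProbLemmas

variable {Ω : Type*} [Fintype Ω]

lemma prob_def (A : Ω → Prop) [DecidablePred A] :
    prob A = ((Finset.univ.filter A).card : ℝ) / Fintype.card Ω := by
  unfold prob; congr!

lemma prob_nonneg (A : Ω → Prop) : 0 ≤ prob A := by unfold prob; positivity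

lemma prob_mono {A B : Ω → Prop} (h : ∀ ω, A ω → B ω) : prob A ≤ prob B := by
  classical
  unfold prob
  apply div_le_div_of_nonneg_right _ (by positivity)
  exact_mod_cast Finset.card_le_card (Finset.monotone_filter_right _ (fun ω _ hω => h ω hω))

lemma prob_or (A B : Ω → Prop) : prob (fun ω => A ω ∨ B ω) ≤ prob A + prob B := by
  classical
  rw [prob_def, prob_def A, prob_def B, ← add_div]
  apply div_le_div_of_nonneg_right _ (by positivity)
  rw [Finset.filter_or]
  exact_mod_cast Finset.card_union_le _ _

lemma prob_exists_le {ι : Type*} (s : Finset ι) (A : ι → Ω → Prop) :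
    prob (fun ω => ∃ i ∈ s, A i ω) ≤ ∑ i ∈ s, prob (A i) := by
  classical
  induction s using Finset.induction_on with
  | empty => simp [prob]
  | insert i s hi ih =>
    rw [Finset.sum_insert hi]
    calc prob (fun ω => ∃ j ∈ insert i s, A j ω)
        ≤ prob (fun ω => A i ω ∨ ∃ j ∈ s, A j ω) := prob_mono (by
          rintro ω ⟨j, hj, h⟩
          rcases Finset.mem_insert.1 hj with rfl | hj
          · exact Or.inl h
          · exact Or.inr ⟨j, hj, h⟩)
      _ ≤ _ := (prob_or _ _).trans (by linarith)

lemma prob_exists_le_card {ι : Type*} (s : Finset ι) (A : ι → Ω → Prop) (c : ℝ)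
    (h : ∀ i ∈ s, prob (A i) ≤ c) :
    prob (fun ω => ∃ i ∈ s, A i ω) ≤ s.card * c := by
  refine (prob_exists_le s A).trans ?_
  rw [← nsmul_eq_mul]
  exact Finset.sum_le_card_nsmul _ _ _ h

lemma expect_eq_sum {ι : Type*} (s : Finset ι) (f : ι → Ω → ℝ) :
    expect (fun ω => ∑ i ∈ s, f i ω) = ∑ i ∈ s, expect (f i) := by
  unfold expect
  rw [Finset.sum_comm, Finset.sum_div]

lemma expect_mono {f g : Ω → ℝ} (h : ∀ ω, f ω ≤ g ω) : expect f ≤ expect g := by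
  unfold expect
  apply div_le_div_of_nonneg_right _ (by positivity)
  exact Finset.sum_le_sum fun ω _ => h ω

lemma expect_le_of_event [Nonempty Ω] {f : Ω → ℝ} (B : Ω → Prop) (c : ℝ) (hc : 0 ≤ c)
    (h1 : ∀ ω, f ω ≤ 1) (h2 : ∀ ω, ¬ B ω → f ω ≤ c) : expect f ≤ prob B + c := by
  classical
  have h3 : ∀ ω, f ω ≤ (if B ω then 1 else 0) + c := by
    intro ω
    by_cases h : B ω
    · rw [if_pos h]; linarith [h1 ω]
    · rw [if_neg h]; linarith [h2 ω h]
  refine (expect_mono h3).trans ?_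
  have hcard : (0 : ℝ) < Fintype.card Ω := by exact_mod_cast Fintype.card_pos
  rw [prob_def]
  unfold expect
  rw [Finset.sum_add_distrib, add_div]
  simp only [Finset.sum_boole, Finset.sum_const, nsmul_eq_mul, Finset.card_univ]
  have : (Fintype.card Ω : ℝ) * c / Fintype.card Ω = c := by field_simp
  rw [this]

end ProbLemmas

section ProductSpace

variable {ι : Type*} [Fintype ι] [DecidableEq ι] {N : ℕ}

lemma prob_indep (A B : (ι → Fin N) → Prop) (S : Finset ι) (hN : 0 < N)
    (hA : ∀ ω ω', (∀ i ∈ S, ω i = ω' i) → A ω → A ω')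
    (hB : ∀ ω ω', (∀ i, i ∉ S → ω i = ω' i) → B ω → B ω') :
    prob (fun ω => A ω ∧ B ω) ≤ prob A * prob B := by
  classical
  have : Nonempty (Fin N) := ⟨⟨0, hN⟩⟩
  have hcard : (0 : ℝ) < Fintype.card (ι → Fin N) := by exact_mod_cast Fintype.card_pos
  rw [prob_def, prob_def A, prob_def B, div_mul_div_comm, div_le_div_iff₀ hcard (by positivity)]
  have key : (Finset.univ.filter fun ω : ι → Fin N => A ω ∧ B ω).card *
      Fintype.card (ι → Fin N) ≤ (Finset.univ.filter A).card * (Finset.univ.filter B).card := by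
    rw [← Finset.card_univ, ← Finset.card_product, ← Finset.card_product]
    apply Finset.card_le_card_of_injOn
      (fun q => (fun i => if i ∈ S then q.1 i else q.2 i, fun i => if i ∈ S then q.2 i else q.1 i))
    · rintro ⟨ω, η⟩ hq
      simp only [Finset.coe_product, Set.mem_prod, Finset.mem_coe, Finset.mem_filter,
        Finset.mem_univ, true_and, and_true] at hq ⊢
      refine ⟨hA ω _ (fun i hi => by simp [hi]) hq.1, hB ω _ (fun i hi => by simp [hi]) hq.2⟩
    · rintro ⟨ω, η⟩ _ ⟨ω', η'⟩ _ h
      simp only [Prod.mk.injEq] at h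
      have h1 := fun i => congrFun h.1 i
      have h2 := fun i => congrFun h.2 i
      refine Prod.ext (funext fun i => ?_) (funext fun i => ?_)
      · by_cases hi : i ∈ S
        · simpa [hi] using h1 i
        · simpa [hi] using h2 i
      · by_cases hi : i ∈ S
        · simpa [hi] using h2 i
        · simpa [hi] using h1 i
  have key' : ((Finset.univ.filter fun ω : ι → Fin N => A ω ∧ B ω).card : ℝ) *
      Fintype.card (ι → Fin N) ≤ (Finset.univ.filter A).card * (Finset.univ.filter B).card := by
    exact_mod_cast key
  calc _ = (((Finset.univ.filter fun ω : ι → Fin N => A ω ∧ B ω).card : ℝ) *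
      Fintype.card (ι → Fin N)) * Fintype.card (ι → Fin N) := by ring
    _ ≤ _ := mul_le_mul_of_nonneg_right key' hcard.le

lemma prob_count (A : (ι → Fin N) → Prop) (K : Finset ι) (hN : 0 < N)
    (hA : ∀ ω ω', A ω → A ω' → (∀ i, i ∉ K → ω i = ω' i) → ω = ω') :
    prob A ≤ 1 / (N : ℝ) ^ K.card := by
  classical
  have : Nonempty (Fin N) := ⟨⟨0, hN⟩⟩
  have hcard : (0 : ℝ) < Fintype.card (ι → Fin N) := by exact_mod_cast Fintype.card_pos
  have hNr : (0 : ℝ) < N := by exact_mod_cast hN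
  unfold prob
  rw [div_le_div_iff₀ hcard (by positivity), one_mul]
  have key : (Finset.univ.filter A).card * (Finset.univ : Finset (K → Fin N)).card ≤
      (Finset.univ : Finset (ι → Fin N)).card := by
    rw [← Finset.card_product]
    apply Finset.card_le_card_of_injOn
      (fun q => fun i => if h : i ∈ K then q.2 ⟨i, h⟩ else q.1 i)
    · intro q _; simp
    · rintro ⟨ω, η⟩ hq ⟨ω', η'⟩ hq' h
      simp only [Finset.coe_product, Set.mem_prod, Finset.mem_coe, Finset.mem_filter,
        Finset.mem_univ, true_and, and_true] at hq hq'
      have h1 := fun i => congrFun h i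
      simp only at h1
      have e1 : ω = ω' := hA ω ω' hq hq' (fun i hi => by simpa [hi] using h1 i)
      refine Prod.ext e1 (funext fun i => ?_)
      have := h1 i
      simpa using this
  have e2 : (Finset.univ : Finset (K → Fin N)).card = N ^ K.card := by
    rw [Finset.card_univ, Fintype.card_fun, Fintype.card_fin, Fintype.card_coe]
  rw [e2, Finset.card_univ] at key
  exact_mod_cast key

end ProductSpace

/-! ### Hopping -/

lemma dist1_eq_one_iff {d : ℕ} (x y : Fin d → ℤ) : dist1 x y = 1 ↔ ∃ u, y = x + stp u := by
  classical
  constructor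
  · intro h
    have hne : ∃ i, (x i - y i).natAbs ≠ 0 := by
      by_contra hc
      push Not at hc
      simp [dist1, hc] at h
    obtain ⟨i, hi⟩ := hne
    have hs : (x i - y i).natAbs + ∑ j ∈ Finset.univ.erase i, (x j - y j).natAbs = 1 := by
      rw [Finset.add_sum_erase _ (fun j => (x j - y j).natAbs) (Finset.mem_univ i)]; exact h
    have hz : ∑ j ∈ Finset.univ.erase i, (x j - y j).natAbs = 0 := by omega
    have hz' : ∀ j, j ≠ i → y j = x j := by
      intro j hj
      have := Finset.sum_eq_zero_iff.1 hz j (Finset.mem_erase.2 ⟨hj, Finset.mem_univ _⟩)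
      omega
    have hi1 : (x i - y i).natAbs = 1 := by omega
    refine ⟨(i, decide (y i = x i + 1)), funext fun j => ?_⟩
    by_cases hj : j = i
    · subst hj
      simp only [stp, Pi.add_apply, Pi.single_eq_same, decide_eq_true_eq]
      split_ifs with h5
      · exact h5
      · omega
    · simp [stp, Pi.single_eq_of_ne hj, hz' j hj]
  · rintro ⟨u, rfl⟩
    unfold dist1
    rw [Finset.sum_eq_single u.1]
    · simp only [stp, Pi.add_apply, Pi.single_eq_same]
      split_ifs <;> simp
    · intro j _ hj
      simp [stp, Pi.single_eq_of_ne hj]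
    · simp

lemma stp_injective {d : ℕ} : Function.Injective (stp : Fin d × Bool → Fin d → ℤ) := by
  rintro ⟨i, σ⟩ ⟨j, τ⟩ h
  have h1 := congrFun h i
  by_cases hij : i = j
  · subst hij
    cases σ <;> cases τ <;> simp [stp] at h1 ⊢
  · cases σ <;> simp [stp, Pi.single_eq_of_ne hij] at h1

lemma hop_sum {d : ℕ} (U : Finset (Fin d → ℤ)) (φ : (Fin d → ℤ) → ℝ) (h0 : ∀ y, y ∉ U → φ y = 0)
    (x : Fin d → ℤ) :
    ∑ u : Fin d × Bool, φ (x + stp u) = ∑ y ∈ U, (if dist1 x y = 1 then 1 else 0) * φ y := by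
  classical
  have e1 : ∑ u : Fin d × Bool, φ (x + stp u) =
      ∑ y ∈ Finset.univ.image (fun u : Fin d × Bool => x + stp u), φ y := by
    rw [Finset.sum_image]
    intro u _ w _ h
    exact stp_injective (add_left_cancel h)
  rw [e1]
  have e2 : ∑ y ∈ U, (if dist1 x y = 1 then (1 : ℝ) else 0) * φ y =
      ∑ y ∈ U.filter (fun y => dist1 x y = 1), φ y := by
    rw [Finset.sum_filter]
    apply Finset.sum_congr rfl
    intro y _
    split_ifs <;> simp
  rw [e2]
  symm
  apply Finset.sum_subset
  · intro y hy
    obtain ⟨u, hu⟩ := (dist1_eq_one_iff x y).1 (Finset.mem_filter.1 hy).2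
    exact Finset.mem_image.2 ⟨u, Finset.mem_univ _, hu.symm⟩
  · intro y hy hn
    apply h0
    intro hU
    apply hn
    rw [Finset.mem_filter]
    obtain ⟨u, _, hu⟩ := Finset.mem_image.1 hy
    exact ⟨hU, (dist1_eq_one_iff x y).2 ⟨u, hu.symm⟩⟩

lemma wronskian {d : ℕ} (γ E : ℝ) (v v' φ φ' : (Fin d → ℤ) → ℝ) (U : Finset (Fin d → ℤ))
    (h0 : ∀ y, y ∉ U → φ y = 0) (h0' : ∀ y, y ∉ U → φ' y = 0) :
    ∑ x ∈ U, (v x - v' x) * (φ x * φ' x) =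
      ∑ x ∈ U, (φ' x * Aop γ E v φ x - φ x * Aop γ E v' φ' x) := by
  have e1 : ∀ x, φ' x * Aop γ E v φ x - φ x * Aop γ E v' φ' x = (v x - v' x) * (φ x * φ' x)
      - γ * (φ' x * (∑ y ∈ U, (if dist1 x y = 1 then 1 else 0) * φ y)) +
        γ * (φ x * (∑ y ∈ U, (if dist1 x y = 1 then 1 else 0) * φ' y)) := by
    intro x
    rw [← hop_sum U φ h0, ← hop_sum U φ' h0']
    simp only [Aop]; ring
  have e2 : ∑ x ∈ U, φ' x * (∑ y ∈ U, (if dist1 x y = 1 then 1 else 0) * φ y) =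
      ∑ x ∈ U, φ x * (∑ y ∈ U, (if dist1 x y = 1 then 1 else 0) * φ' y) := by
    simp only [Finset.mul_sum]
    rw [Finset.sum_comm]
    apply Finset.sum_congr rfl; intro x _
    apply Finset.sum_congr rfl; intro y _
    rw [dist1_comm]; ring
  rw [Finset.sum_congr rfl (fun x _ => e1 x), Finset.sum_add_distrib, Finset.sum_sub_distrib,
    ← Finset.mul_sum, ← Finset.mul_sum, e2]
  ring

/-! ### potentials -/

lemma potential_bounds {d N : ℕ} (hN : 2 ≤ N) (Λ : Finset (Fin d → ℤ)) (ω : Λ → Fin N)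
    (x : Fin d → ℤ) : 0 ≤ potential N Λ ω x ∧ potential N Λ ω x ≤ 1 := by
  have h2 : (2 : ℝ) ≤ N := by exact_mod_cast hN
  unfold potential
  split_ifs with h
  · constructor
    · apply div_nonneg (by positivity); linarith
    · rw [div_le_one (by linarith)]
      have : (ω ⟨x, h⟩ : ℕ) + 1 ≤ N := (ω ⟨x, h⟩).2
      have : ((ω ⟨x, h⟩ : ℕ) : ℝ) + 1 ≤ N := by exact_mod_cast this
      linarith
  · norm_num

lemma potential_sep {d N : ℕ} (hN : 2 ≤ N) (Λ : Finset (Fin d → ℤ)) (ω ω' : Λ → Fin N)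
    (x : Fin d → ℤ) (hx : x ∈ Λ) (h : ω ⟨x, hx⟩ ≠ ω' ⟨x, hx⟩) :
    1 / (N : ℝ) ≤ |potential N Λ ω x - potential N Λ ω' x| := by
  have h2 : (2 : ℝ) ≤ N := by exact_mod_cast hN
  simp only [potential, dif_pos hx]
  rw [← sub_div, abs_div, abs_of_pos (show (0 : ℝ) < N - 1 by linarith)]
  have h1 : (1 : ℝ) ≤ |((ω ⟨x, hx⟩ : ℕ) : ℝ) - (ω' ⟨x, hx⟩ : ℕ)| := by
    have : (1 : ℤ) ≤ |((ω ⟨x, hx⟩ : ℕ) : ℤ) - (ω' ⟨x, hx⟩ : ℕ)| := by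
      apply Int.one_le_abs
      intro hc
      apply h
      apply Fin.ext
      omega
    exact_mod_cast this
  apply div_le_div₀ (abs_nonneg _) h1 (by linarith) (by linarith)

lemma potential_congr {d N : ℕ} (Λ : Finset (Fin d → ℤ)) (ω ω' : Λ → Fin N)
    (x : Fin d → ℤ) (h : ∀ hx : x ∈ Λ, ω ⟨x, hx⟩ = ω' ⟨x, hx⟩) :
    potential N Λ ω x = potential N Λ ω' x := by
  unfold potential
  split_ifs with hx
  · rw [h hx]
  · rfl

lemma prob_core {d N : ℕ} (hN : 2 ≤ N) (Λ : Finset (Fin d → ℤ)) (x : Fin d → ℤ) (hx : x ∈ Λ)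
    (t : ℝ) : prob (fun ω : Λ → Fin N => |potential N Λ ω x - t| < 1 / (4 * N)) ≤ 1 / N := by
  classical
  have h2 : (2 : ℝ) ≤ N := by exact_mod_cast hN
  have := prob_count (fun ω : Λ → Fin N => |potential N Λ ω x - t| < 1 / (4 * N)) {⟨x, hx⟩}
    (by omega) (by
      intro ω ω' h h' hoff
      funext i
      by_cases hi : i = ⟨x, hx⟩
      · by_contra hc
        rw [hi] at hc
        have h3 := potential_sep hN Λ ω ω' x hx hc
        have h4 := abs_sub_le (potential N Λ ω x) t (potential N Λ ω' x)
        rw [abs_sub_comm t] at h4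
        have h5 : 1 / (4 * (N : ℝ)) = 1 / N / 4 := by field_simp
        have h6 : 0 < 1 / (N : ℝ) := by positivity
        linarith
      · exact hoff i (by simpa using hi))
  simpa using this

set_option maxHeartbeats 1000000 in
lemma wegner_prob {d N : ℕ} (hN : 2 ≤ N) {γ E : ℝ} (hγ : 0 < γ) (hγ8 : γ ≤ 1 / 8)
    (hγN : 4 * N * γ ^ 2 ≤ 1) (Λ U : Finset (Fin d → ℤ)) (hUΛ : U ⊆ Λ) (L : ℕ)
    (hUγ : 4 * N * U.card * γ ^ (7 * L) < γ ^ (6 * L + 4)) (p : ℕ → Fin d → ℤ) :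
    prob (fun ω : Λ → Fin N => WegEv γ E (potential N Λ ω) L U p) ≤ 1 / (N : ℝ) ^ (L + 1) := by
  classical
  have h2 : (2 : ℝ) ≤ N := by exact_mod_cast hN
  by_cases hp : (∀ r ≤ L, p r ∈ U) ∧ (∀ r s, r ≤ L → s ≤ L → p r = p s → r = s)
  swap
  · calc _ ≤ prob (fun _ : Λ → Fin N => False) :=
        prob_mono (fun ω h => hp ⟨h.1, h.2.1⟩)
      _ = 0 := by simp [prob]
      _ ≤ _ := by positivity
  obtain ⟨hpU, hpinj⟩ := hp
  let K : Finset Λ := (Finset.univ : Finset (Fin (L + 1))).image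
    (fun r : Fin (L + 1) => (⟨p r, hUΛ (hpU r (by have := r.2; omega))⟩ : Λ))
  have hK : K.card = L + 1 := by
    rw [Finset.card_image_of_injective, Finset.card_univ, Fintype.card_fin]
    intro r s h
    have := congrArg Subtype.val h
    exact Fin.ext (hpinj r s (by have := r.2; omega) (by have := s.2; omega) this)
  rw [← hK]
  apply prob_count _ K (by omega)
  rintro ω ω' ⟨_, _, φ, h0, h1, hA, hr⟩ ⟨_, _, φ', h0', h1', hA', hr'⟩ hoff
  by_contra hne
  set v := potential N Λ ω with hv
  set v' := potential N Λ ω' with hv'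
  have hpK : ∀ x (hx : x ∈ Λ), (∀ r ≤ L, x ≠ p r) → ω ⟨x, hx⟩ = ω' ⟨x, hx⟩ := by
    intro x hx h
    apply hoff
    intro hc
    obtain ⟨r, _, hr⟩ := Finset.mem_image.1 hc
    have := congrArg Subtype.val hr
    exact h r (by have := r.2; omega) this.symm
  have hex : ∃ r, r ≤ L ∧ ∃ hx : p r ∈ Λ, ω ⟨p r, hx⟩ ≠ ω' ⟨p r, hx⟩ := by
    by_contra hc
    push Not at hc
    apply hne
    funext i
    by_cases h : ∃ r ≤ L, (i : Fin d → ℤ) = p r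
    · obtain ⟨r, hrL, hir⟩ := h
      have hx : p r ∈ Λ := hir ▸ i.2
      have := hc r hrL hx
      have e : i = ⟨p r, hx⟩ := Subtype.ext hir
      rw [e]; exact this
    · push Not at h
      exact hpK i.1 i.2 h
  set r := Nat.find hex with hrd
  obtain ⟨hrL, hrΛ, hrne⟩ : r ≤ L ∧ ∃ hx : p r ∈ Λ, ω ⟨p r, hx⟩ ≠ ω' ⟨p r, hx⟩ := Nat.find_spec hex
  have hlt : ∀ s < r, v (p s) = v' (p s) := by
    intro s hs
    have := Nat.find_min hex hs
    push Not at this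
    exact potential_congr Λ ω ω' _ (this (by omega))
  -- the Wronskian
  have hw := wronskian γ E v v' φ φ' U h0 h0'
  have hR : |∑ x ∈ U, (φ' x * Aop γ E v φ x - φ x * Aop γ E v' φ' x)| ≤
      2 * U.card * γ ^ (7 * L) := by
    calc _ ≤ ∑ x ∈ U, |φ' x * Aop γ E v φ x - φ x * Aop γ E v' φ' x| :=
          Finset.abs_sum_le_sum_abs _ _
      _ ≤ ∑ x ∈ U, 2 * γ ^ (7 * L) := by
          apply Finset.sum_le_sum
          intro x hx
          have t := abs_sub (φ' x * Aop γ E v φ x) (φ x * Aop γ E v' φ' x)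
          rw [abs_mul, abs_mul] at t
          have t1 : |φ' x| * |Aop γ E v φ x| ≤ 1 * γ ^ (7 * L) :=
            mul_le_mul (h1' x) (hA x hx) (abs_nonneg _) (by norm_num)
          have t2 : |φ x| * |Aop γ E v' φ' x| ≤ 1 * γ ^ (7 * L) :=
            mul_le_mul (h1 x) (hA' x hx) (abs_nonneg _) (by norm_num)
          linarith
      _ = _ := by rw [Finset.sum_const, nsmul_eq_mul]; ring
  rw [← hw] at hR
  set f : (Fin d → ℤ) → ℝ := fun x => (v x - v' x) * (φ x * φ' x) with hf
  have hsum : ∑ x ∈ U, f x = ∑ s ∈ Finset.range (L + 1), f (p s) := by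
    rw [← Finset.sum_image (s := Finset.range (L + 1)) (g := p) (f := f)]
    · symm
      apply Finset.sum_subset
      · intro x hx
        obtain ⟨s, hs, rfl⟩ := Finset.mem_image.1 hx
        exact hpU s (by have := Finset.mem_range.1 hs; omega)
      · intro x hx hn
        have : v x = v' x := by
          apply potential_congr
          intro hxΛ
          apply hpK x hxΛ
          rintro s hs rfl
          exact hn (Finset.mem_image_of_mem _ (Finset.mem_range.2 (by omega)))
        simp [hf, this]
    · intro s hs t ht h
      simp only [Finset.coe_range, Set.mem_Iio] at hs ht
      exact hpinj s t (by omega) (by omega) h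
  have hsplit : ∑ s ∈ Finset.range (L + 1), f (p s) =
      f (p r) + ∑ s ∈ Finset.Ico (r + 1) (L + 1), f (p s) := by
    rw [← Finset.sum_range_add_sum_Ico _ (show r + 1 ≤ L + 1 by omega), Finset.sum_range_succ]
    rw [Finset.sum_eq_zero (s := Finset.range r)]
    · ring
    · intro s hs
      simp [hf, hlt s (Finset.mem_range.1 hs)]
  have hmain : 1 / (N : ℝ) * γ ^ (6 * r + 4) ≤ |f (p r)| := by
    have e1 := potential_sep hN Λ ω ω' (p r) hrΛ hrne
    have e2 := (hr r hrL).1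
    have e3 := (hr' r hrL).1
    simp only [hf, abs_mul]
    apply mul_le_mul e1 _ (by positivity) (abs_nonneg _)
    calc γ ^ (6 * r + 4) = γ ^ (3 * r + 2) * γ ^ (3 * r + 2) := by
          rw [← pow_add]; congr 1; ring
      _ ≤ _ := mul_le_mul e2 e3 (by positivity) (abs_nonneg _)
  have htail : |∑ s ∈ Finset.Ico (r + 1) (L + 1), f (p s)| ≤ 2 * γ ^ (6 * r + 6) := by
    calc _ ≤ ∑ s ∈ Finset.Ico (r + 1) (L + 1), |f (p s)| := Finset.abs_sum_le_sum_abs _ _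
      _ ≤ ∑ s ∈ Finset.Ico (r + 1) (L + 1), (γ ^ 6) ^ s := by
          apply Finset.sum_le_sum
          intro s hs
          have hsL : s ≤ L := by have := (Finset.mem_Ico.1 hs).2; omega
          have e2 := (hr s hsL).2
          have e3 := (hr' s hsL).2
          have b1 := potential_bounds hN Λ ω (p s)
          have b2 := potential_bounds hN Λ ω' (p s)
          have e1 : |v (p s) - v' (p s)| ≤ 1 := by
            rw [abs_le]; constructor <;> linarith
          simp only [hf, abs_mul]
          calc _ ≤ 1 * (γ ^ (3 * s) * γ ^ (3 * s)) := by
                apply mul_le_mul e1 _ (by positivity) (by norm_num)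
                exact mul_le_mul e2 e3 (abs_nonneg _) (by positivity)
            _ = (γ ^ 6) ^ s := by
                rw [one_mul, ← pow_add, ← pow_mul]; congr 1; ring
      _ ≤ (γ ^ 6) ^ (r + 1) / (1 - γ ^ 6) := by
          apply geom_sum_Ico_le_of_lt_one (by positivity)
          exact pow_lt_one₀ hγ.le (by linarith) (by norm_num)
      _ ≤ _ := by
          have hg : γ ^ 6 ≤ 1 / 2 := by
            have : γ ^ 6 ≤ γ ^ 1 := pow_le_pow_of_le_one hγ.le (by linarith) (by norm_num)
            rw [pow_one] at this; linarith
          rw [div_le_iff₀ (by linarith), ← pow_mul]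
          have : 6 * (r + 1) = 6 * r + 6 := by ring
          rw [this]
          have h7 : 0 < γ ^ (6 * r + 6) := by positivity
          nlinarith
  rw [hsum, hsplit] at hR
  have hfin : |f (p r)| ≤ 2 * U.card * γ ^ (7 * L) + 2 * γ ^ (6 * r + 6) := by
    have : f (p r) = (f (p r) + ∑ s ∈ Finset.Ico (r + 1) (L + 1), f (p s)) -
      ∑ s ∈ Finset.Ico (r + 1) (L + 1), f (p s) := by ring
    rw [this]
    exact (abs_sub _ _).trans (add_le_add hR htail)
  have hX : γ ^ (6 * L + 4) ≤ γ ^ (6 * r + 4) :=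
    pow_le_pow_of_le_one hγ.le (by linarith) (by omega)
  have hNX : γ ^ (6 * r + 4) ≤ N * (2 * U.card * γ ^ (7 * L) + 2 * γ ^ (6 * r + 6)) := by
    have := hmain.trans hfin
    rw [one_div, inv_mul_le_iff₀ (by linarith)] at this
    exact this
  have e6 : γ ^ (6 * r + 6) = γ ^ (6 * r + 4) * γ ^ 2 := by rw [← pow_add]
  rw [e6] at hNX
  have h8 : 0 < γ ^ (6 * r + 4) := by positivity
  have h9 : γ ^ (6 * r + 4) * (4 * N * γ ^ 2) ≤ γ ^ (6 * r + 4) * 1 :=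
    mul_le_mul_of_nonneg_left hγN h8.le
  nlinarith

/-! ### The induction step -/

lemma good_congr {d : ℕ} {γ E : ℝ} {v v' : (Fin d → ℤ) → ℝ} {L e : ℕ} {S : Finset (Fin d → ℤ)}
    {x : Fin d → ℤ} (h : ∀ y ∈ S, v y = v' y) (hg : Good γ E v L e S x) :
    Good γ E v' L e S x := by
  intro ψ F m hF hm h0 hA hb
  refine hg ψ F m hF hm h0 (fun y hy => ?_) hb
  have := hA y hy
  simp only [Aop] at this ⊢
  rw [h y hy]; exact this

lemma card_Icc_le {d : ℕ} (lo hi : Fin d → ℤ) (n : ℕ) (h : ∀ i, hi i ≤ lo i + n) :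
    (Finset.Icc lo hi).card ≤ (n + 1) ^ d := by
  rw [Pi.card_Icc]
  refine (Finset.prod_le_pow_card _ _ (n + 1) (fun i _ => ?_)).trans (by simp)
  rw [Int.card_Icc]
  have := h i
  omega

/-- consequences of smallness of `γ` -/
lemma gamma_facts {d N : ℕ} {γ : ℝ} (hd : 1 ≤ d) (hN : 2 ≤ N) (hγ : 0 < γ)
    (hγB : (8 * d * N * 8 ^ d : ℝ) ^ 4 * γ ≤ 1) :
    8 * d * γ ≤ 1 ∧ γ ≤ 1 / 8 ∧ 4 * N * γ ^ 2 ≤ 1 ∧ 8 * N * γ ≤ 1 ∧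
    (8 * d * N : ℝ) ^ 4 * γ ≤ 1 ∧ (4 * N * 8 ^ d : ℝ) ^ 2 * γ ≤ 1 := by
  have hd1 : (1 : ℝ) ≤ d := by exact_mod_cast hd
  have hN1 : (2 : ℝ) ≤ N := by exact_mod_cast hN
  have h8 : (1 : ℝ) ≤ 8 ^ d := one_le_pow₀ (by norm_num)
  set B : ℝ := 8 * d * N * 8 ^ d with hB
  have hdN : (1 : ℝ) ≤ d * N := by nlinarith
  have hb1 : (8 * d * N : ℝ) ≤ B := by
    rw [hB]; nlinarith [mul_pos (show (0 : ℝ) < d by linarith) (show (0 : ℝ) < N by linarith)]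
  have hb2 : (4 * N * 8 ^ d : ℝ) ≤ B := by
    rw [hB]
    have : (0 : ℝ) ≤ N * 8 ^ d := by positivity
    have : N * 8 ^ d ≤ (d : ℝ) * (N * 8 ^ d) := by nlinarith
    nlinarith
  have hb3 : (8 * d : ℝ) ≤ B := by nlinarith
  have hb4 : (8 * N : ℝ) ≤ B := by nlinarith
  have hB1 : 1 ≤ B := by nlinarith
  have hB4 : B ≤ B ^ 4 := le_self_pow₀ hB1 (by norm_num)
  have hBγ : B * γ ≤ 1 := le_trans (mul_le_mul_of_nonneg_right hB4 hγ.le) hγB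
  have g1 : 8 * d * γ ≤ 1 := le_trans (mul_le_mul_of_nonneg_right hb3 hγ.le) hBγ
  have g2 : γ ≤ 1 / 8 := by nlinarith
  have g3 : 8 * N * γ ≤ 1 := le_trans (mul_le_mul_of_nonneg_right hb4 hγ.le) hBγ
  refine ⟨g1, g2, ?_, g3, ?_, ?_⟩
  · nlinarith
  · refine le_trans (mul_le_mul_of_nonneg_right ?_ hγ.le) hγB
    exact pow_le_pow_left₀ (by positivity) hb1 4
  · refine le_trans (mul_le_mul_of_nonneg_right ?_ hγ.le) hγB
    calc (4 * N * 8 ^ d : ℝ) ^ 2 ≤ B ^ 2 := pow_le_pow_left₀ (by positivity) hb2 2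
      _ ≤ B ^ 4 := pow_le_pow_right₀ hB1 (by norm_num)

lemma gamma_card {d N L : ℕ} {γ : ℝ} (hN : 2 ≤ N) (hL : 1000 ≤ L) (hγ : 0 < γ)
    (h : (4 * N * 8 ^ d : ℝ) ^ 2 * γ ≤ 1) (n : ℕ) (hn : n ≤ (L ^ 3) ^ d) :
    4 * N * n * γ ^ (7 * L) < γ ^ (6 * L + 4) := by
  have hN1 : (2 : ℝ) ≤ N := by exact_mod_cast hN
  have h8 : (1 : ℝ) ≤ 8 ^ d := one_le_pow₀ (by norm_num)
  have hL2 : L ≤ 2 ^ L := Nat.lt_two_pow_self.le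
  have hn2 : n ≤ (8 ^ d) ^ L := by
    calc n ≤ (L ^ 3) ^ d := hn
      _ ≤ ((2 ^ L) ^ 3) ^ d := Nat.pow_le_pow_left (Nat.pow_le_pow_left hL2 3) d
      _ = (8 ^ d) ^ L := by
        rw [show (8 : ℕ) = 2 ^ 3 by norm_num, ← pow_mul, ← pow_mul, ← pow_mul, ← pow_mul]
        congr 1; ring
  have hn3 : (n : ℝ) ≤ (8 ^ d) ^ L := by exact_mod_cast hn2
  set B : ℝ := 4 * N * 8 ^ d with hB
  have hB1 : 1 < B := by rw [hB]; nlinarith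
  have h1 : 4 * N * (n : ℝ) ≤ B ^ L := by
    rw [hB, mul_pow]
    apply mul_le_mul _ hn3 (by positivity) (by positivity)
    exact le_self_pow₀ (by linarith) (by omega)
  have h2 : B ^ (2 * (L - 4)) * γ ^ (L - 4) ≤ 1 := by
    rw [pow_mul, ← mul_pow]
    exact pow_le_one₀ (by positivity) h
  have h3 : B ^ L < B ^ (2 * (L - 4)) := pow_lt_pow_right₀ hB1 (by omega)
  have h4 : 4 * N * (n : ℝ) * γ ^ (L - 4) < 1 := by
    have hg : 0 < γ ^ (L - 4) := by positivity
    nlinarith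
  have h5 : γ ^ (7 * L) = γ ^ (L - 4) * γ ^ (6 * L + 4) := by
    rw [← pow_add]; congr 1; omega
  rw [h5, ← mul_assoc]
  have : 0 < γ ^ (6 * L + 4) := by positivity
  nlinarith

/-- a bad admissible box inside `R` -/
def BadBox {d : ℕ} (γ E : ℝ) (v : (Fin d → ℤ) → ℝ) (a : Fin d) (L e : ℕ)
    (R : Finset (Fin d → ℤ)) (x : Fin d → ℤ) (s t : Fin d → ℤ) : Prop :=
  Adm a L x (x - s) (x + t) ∧ Finset.Icc (x - s) (x + t) ⊆ R ∧
    ¬ Good γ E v L e (Finset.Icc (x - s) (x + t)) x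

lemma exists_badBox {d : ℕ} {γ E : ℝ} {v : (Fin d → ℤ) → ℝ} {a : Fin d} {L e : ℕ}
    {R : Finset (Fin d → ℤ)} {x : Fin d → ℤ} (h : ¬ AllGood γ E v a L e R x) :
    ∃ s ∈ Finset.Icc (0 : Fin d → ℤ) (fun _ => (L : ℤ)),
    ∃ t ∈ Finset.Icc (0 : Fin d → ℤ) (fun _ => (L : ℤ)), BadBox γ E v a L e R x s t := by
  unfold AllGood at h
  push Not at h
  obtain ⟨lo, hi, hadm, hsub, hbad⟩ := h
  refine ⟨x - lo, ?_, hi - x, ?_, ?_⟩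
  · rw [mem_Icc_pi]; intro i
    have := hadm.1 i
    simp only [Pi.sub_apply, Pi.zero_apply]; omega
  · rw [mem_Icc_pi]; intro i
    have := hadm.1 i
    simp only [Pi.sub_apply, Pi.zero_apply]; omega
  · unfold BadBox
    rw [sub_sub_cancel, add_sub_cancel]
    exact ⟨hadm, hsub, hbad⟩

lemma prob_false {Ω : Type*} [Fintype Ω] {A : Ω → Prop} (h : ∀ ω, ¬ A ω) : prob A = 0 := by
  simp [prob, h]

lemma prob_badBox {d N : ℕ} {γ E : ℝ} {a : Fin d} {L e : ℕ} {Λ R : Finset (Fin d → ℤ)}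
    (hR : R ⊆ Λ) (P : ℝ) (hP : 0 ≤ P)
    (IH : ∀ x lo hi, Adm a L x lo hi → Finset.Icc lo hi ⊆ Λ →
      prob (fun ω : Λ → Fin N => ¬ Good γ E (potential N Λ ω) L e (Finset.Icc lo hi) x) ≤ P)
    (x s t : Fin d → ℤ) :
    prob (fun ω : Λ → Fin N => BadBox γ E (potential N Λ ω) a L e R x s t) ≤ P := by
  by_cases h : Adm a L x (x - s) (x + t) ∧ Finset.Icc (x - s) (x + t) ⊆ R
  · exact (prob_mono (fun ω hω => hω.2.2)).trans (IH x _ _ h.1 (h.2.trans hR))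
  · rw [prob_false (fun ω hω => h ⟨hω.1, hω.2.1⟩)]; exact hP

lemma prob_badBox_pair {d N : ℕ} (hN : 0 < N) {γ E : ℝ} {a : Fin d} {L e : ℕ}
    {Λ R : Finset (Fin d → ℤ)} (hR : R ⊆ Λ) (P : ℝ) (hP : 0 ≤ P)
    (IH : ∀ x lo hi, Adm a L x lo hi → Finset.Icc lo hi ⊆ Λ →
      prob (fun ω : Λ → Fin N => ¬ Good γ E (potential N Λ ω) L e (Finset.Icc lo hi) x) ≤ P)
    (x s t x' s' t' : Fin d → ℤ) :
    prob (fun ω : Λ → Fin N => ¬ near (2 * L) x x' ∧ BadBox γ E (potential N Λ ω) a L e R x s t ∧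
      BadBox γ E (potential N Λ ω) a L e R x' s' t') ≤ P * P := by
  classical
  by_cases h : ¬ near (2 * L) x x' ∧ Adm a L x (x - s) (x + t) ∧ Adm a L x' (x' - s') (x' + t')
  swap
  · rw [prob_false (fun ω hω => h ⟨hω.1, hω.2.1.1, hω.2.2.1⟩)]; positivity
  obtain ⟨hn, h1, h2⟩ := h
  have hdisj : ∀ y, y ∈ Finset.Icc (x - s) (x + t) → y ∉ Finset.Icc (x' - s') (x' + t') := by
    intro y hy hy'
    apply hn
    intro i
    have e1 := mem_Icc_pi.1 hy i
    have e2 := mem_Icc_pi.1 hy' i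
    have e3 := h1.1 i
    have e4 := h2.1 i
    rw [abs_le]
    omega
  calc _ ≤ prob (fun ω : Λ → Fin N => BadBox γ E (potential N Λ ω) a L e R x s t ∧
      BadBox γ E (potential N Λ ω) a L e R x' s' t') := prob_mono (fun ω hω => hω.2)
    _ ≤ _ := prob_indep _ _
        (Finset.univ.filter fun i : Λ => (i : Fin d → ℤ) ∈ Finset.Icc (x - s) (x + t)) hN
        (by
          rintro ω ω' h ⟨g1, g2, g3⟩
          refine ⟨g1, g2, fun hc => g3 (good_congr (fun y hy => ?_) hc)⟩
          refine (potential_congr Λ ω ω' y fun hyΛ => h _ ?_).symm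
          simpa using hy)
        (by
          rintro ω ω' h ⟨g1, g2, g3⟩
          refine ⟨g1, g2, fun hc => g3 (good_congr (fun y hy => ?_) hc)⟩
          refine (potential_congr Λ ω ω' y fun hyΛ => h _ ?_).symm
          intro hc'
          exact hdisj y (by simpa using hc') hy)
    _ ≤ P * P := mul_le_mul (prob_badBox hR P hP IH x s t) (prob_badBox hR P hP IH x' s' t')
        (prob_nonneg _) hP

lemma card_code (d T : ℕ) : Fintype.card (Code d T) = 4 * (4 * d + 2) ^ T := by
  rw [Fintype.card_prod, Fintype.card_prod, Fintype.card_fun, Fintype.card_option,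
    Fintype.card_prod, Fintype.card_finset, Fintype.card_fin, Fintype.card_fin,
    Fintype.card_bool, Fintype.card_fin, show 4 * d + 2 = (d * 2 + 1) * 2 by ring, mul_pow, pow_succ]
  ring

lemma det_dichotomy {d : ℕ} {γ E : ℝ} {v : (Fin d → ℤ) → ℝ} {a : Fin d} {L e M : ℕ}
    (hM : 1000 ≤ M) (hML : M ≤ L) (hLe : L ≤ 2 * e)
    {lo hi z : Fin d → ℤ} (hγ : 0 < γ) (hγd : 8 * d * γ ≤ 1)
    (hv : ∀ x, 0 ≤ v x ∧ v x ≤ 1)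
    (hAdm : Adm a (M * L) z lo hi) (UU : (Fin d → ℤ) → Finset (Fin d → ℤ))
    (hUU : ∀ b x, x ∈ UU b ↔ x ∈ Finset.Icc lo hi ∧ near (24 * L) b x)
    (hbad : ¬ Good γ E v (M * L) (e * (M - 60)) (Finset.Icc lo hi) z) :
    (∃ x ∈ Finset.Icc lo hi, ∃ x' ∈ Finset.Icc lo hi, ¬ near (2 * L) x x' ∧
      ¬ AllGood γ E v a L e (Finset.Icc lo hi) x ∧ ¬ AllGood γ E v a L e (Finset.Icc lo hi) x') ∨
    (∃ b ∈ Finset.Icc lo hi, ∃ y ∈ UU b, ∃ c : Code d (19 * L),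
      WegEv γ E v L (UU b) (dec a y c)) := by
  by_contra hc
  rw [not_or] at hc
  obtain ⟨hc1, hc2⟩ := hc
  apply hbad
  have hz : z ∈ Finset.Icc lo hi := mem_Icc_pi.2 fun i => ⟨(hAdm.1 i).1, (hAdm.1 i).2.1⟩
  obtain ⟨b, hb, hgood⟩ : ∃ b ∈ Finset.Icc lo hi, ∀ x ∈ Finset.Icc lo hi, ¬ near (2 * L) b x →
      AllGood γ E v a L e (Finset.Icc lo hi) x := by
    by_cases h : ∃ x ∈ Finset.Icc lo hi, ¬ AllGood γ E v a L e (Finset.Icc lo hi) x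
    · obtain ⟨b, hb, hbg⟩ := h
      refine ⟨b, hb, fun x hx hn => ?_⟩
      by_contra hxg
      exact hc1 ⟨b, hb, x, hx, hn, hbg, hxg⟩
    · push Not at h
      exact ⟨z, hz, fun x hx _ => h x hx⟩
  have hside : lo a + 48 * L ≤ hi a := by
    have := hAdm.2
    have h2 : (1000 : ℤ) ≤ M := by exact_mod_cast hM
    push_cast at this
    nlinarith
  by_cases hNR : NonRes γ E v (7 * L) (UU b)
  · exact det_step hM hML hLe hγ hγd hAdm hgood (UU b) (hUU b) hNR
  · exfalso
    apply hc2
    obtain ⟨y, hy, c, hw⟩ := wegner_det (by omega) hLe hγ hγd hv hside hb hgood (UU b) (hUU b) hNR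
    exact ⟨b, hb, y, hy, c, hw⟩

set_option maxHeartbeats 1000000 in
lemma step_prob {d N q L e M : ℕ} (a : Fin d) (hM : 1000 ≤ M) (hML2 : M * M ≤ L)
    (hLe : L ≤ 2 * e) (hq : 15 * d ≤ q) (hN2 : 2 ≤ N)
    (hN : 8 * 2 ^ (6 * d + 3 * q) * (4 * d + 2) ^ 19 ≤ N)
    {γ E : ℝ} (hγ : 0 < γ) (hγB : (8 * d * N * 8 ^ d : ℝ) ^ 4 * γ ≤ 1)
    (Λ : Finset (Fin d → ℤ))
    (IH : ∀ x lo hi, Adm a L x lo hi → Finset.Icc lo hi ⊆ Λ →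
      prob (fun ω : Λ → Fin N => ¬ Good γ E (potential N Λ ω) L e (Finset.Icc lo hi) x)
        ≤ 1 / (L : ℝ) ^ (2 * q))
    (z lo hi : Fin d → ℤ) (hAdm : Adm a (M * L) z lo hi) (hsub : Finset.Icc lo hi ⊆ Λ) :
    prob (fun ω : Λ → Fin N =>
      ¬ Good γ E (potential N Λ ω) (M * L) (e * (M - 60)) (Finset.Icc lo hi) z)
        ≤ 1 / ((M * L : ℕ) : ℝ) ^ (2 * q) := by
  classical
  have hd : 1 ≤ d := by have := a.2; omega
  have hML : M ≤ L := by nlinarith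
  have hL : 1000 ≤ L := by omega
  obtain ⟨g1, g2, g3, g4, g5, g6⟩ := gamma_facts hd hN2 hγ hγB
  set R := Finset.Icc lo hi with hR
  have hRcard : R.card ≤ (L ^ 3) ^ d := by
    refine (card_Icc_le lo hi (2 * (M * L)) (fun i => ?_)).trans (Nat.pow_le_pow_left ?_ d)
    · have := hAdm.1 i
      push_cast at this ⊢
      omega
    · have h1 : M * L ≤ L * L := Nat.mul_le_mul_right _ hML
      have h2 : 1000 * (L * L) ≤ L * (L * L) := Nat.mul_le_mul_right _ hL
      have h3 : 1000 * 1000 ≤ L * L := Nat.mul_le_mul hL hL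
      calc 2 * (M * L) + 1 ≤ L * (L * L) := by omega
        _ = L ^ 3 := by ring
  set UU : (Fin d → ℤ) → Finset (Fin d → ℤ) := fun b => R.filter fun x => near (24 * L) b x with hUU
  have hUcard : ∀ b, (UU b).card ≤ (L ^ 3) ^ d := fun b => (Finset.card_filter_le _ _).trans hRcard
  set S := Finset.Icc (0 : Fin d → ℤ) (fun _ => (L : ℤ)) with hS
  have hScard : S.card ≤ (L ^ 2) ^ d := by
    refine (card_Icc_le _ _ L (fun i => by simp)).trans (Nat.pow_le_pow_left (by nlinarith) d)
  set P : ℝ := 1 / (L : ℝ) ^ (2 * q) with hP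
  have hP0 : 0 ≤ P := by positivity
  -- the two events
  set E1 : (Λ → Fin N) → Prop := fun ω => ∃ i ∈ (R ×ˢ (S ×ˢ S)) ×ˢ (R ×ˢ (S ×ˢ S)),
    ¬ near (2 * L) i.1.1 i.2.1 ∧
    BadBox γ E (potential N Λ ω) a L e R i.1.1 i.1.2.1 i.1.2.2 ∧
    BadBox γ E (potential N Λ ω) a L e R i.2.1 i.2.2.1 i.2.2.2 with hE1
  set E2 : (Λ → Fin N) → Prop := fun ω => ∃ b ∈ R, ∃ y ∈ UU b,
    ∃ c ∈ (Finset.univ : Finset (Code d (19 * L))),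
      WegEv γ E (potential N Λ ω) L (UU b) (dec a y c) with hE2
  have hincl : prob (fun ω : Λ → Fin N =>
      ¬ Good γ E (potential N Λ ω) (M * L) (e * (M - 60)) R z) ≤ prob E1 + prob E2 := by
    refine (prob_mono fun ω hω => ?_).trans (prob_or E1 E2)
    rcases det_dichotomy hM hML hLe hγ g1 (potential_bounds hN2 Λ ω) hAdm UU
      (fun b x => by simp [hUU, hR]) hω with h | h
    · left
      obtain ⟨x, hx, x', hx', hn, h1, h2⟩ := h
      obtain ⟨s, hs, t, ht, hb⟩ := exists_badBox h1
      obtain ⟨s', hs', t', ht', hb'⟩ := exists_badBox h2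
      exact ⟨((x, s, t), (x', s', t')), by simp only [Finset.mem_product]; exact
        ⟨⟨hx, hs, ht⟩, hx', hs', ht'⟩, hn, hb, hb'⟩
    · right
      obtain ⟨b, hb, y, hy, c, hw⟩ := h
      exact ⟨b, hb, y, hy, c, Finset.mem_univ _, hw⟩
  have hLr : (1000 : ℝ) ≤ L := by exact_mod_cast hL
  have hNr : (2 : ℝ) ≤ N := by exact_mod_cast hN2
  have p1 : prob E1 ≤ ((L : ℝ) ^ (14 * d)) * (P * P) := by
    refine (prob_exists_le_card _ _ (P * P) (fun i _ => prob_badBox_pair (by omega) hsub P hP0 IH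
      _ _ _ _ _ _)).trans ?_
    apply mul_le_mul_of_nonneg_right _ (by positivity)
    have : ((R ×ˢ (S ×ˢ S)) ×ˢ (R ×ˢ (S ×ˢ S))).card ≤ L ^ (14 * d) := by
      simp only [Finset.card_product]
      have h1 : R.card * (S.card * S.card) ≤ (L ^ 3) ^ d * ((L ^ 2) ^ d * (L ^ 2) ^ d) :=
        Nat.mul_le_mul hRcard (Nat.mul_le_mul hScard hScard)
      refine (Nat.mul_le_mul h1 h1).trans (le_of_eq ?_)
      rw [← pow_mul, ← pow_mul, ← pow_add, ← pow_add, ← pow_add]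
      congr 1; ring
    exact_mod_cast this
  have p2 : prob E2 ≤ (L : ℝ) ^ (6 * d) * (4 * (4 * d + 2) ^ (19 * L)) * (1 / (N : ℝ) ^ (L + 1)) := by
    have q1 : ∀ b ∈ R, prob (fun ω : Λ → Fin N => ∃ y ∈ UU b,
        ∃ c ∈ (Finset.univ : Finset (Code d (19 * L))),
        WegEv γ E (potential N Λ ω) L (UU b) (dec a y c)) ≤
        (((L ^ 3) ^ d : ℕ) : ℝ) * ((4 * (4 * d + 2) ^ (19 * L)) * (1 / (N : ℝ) ^ (L + 1))) := by
      intro b hb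
      refine (prob_exists_le_card _ _ ((4 * (4 * d + 2) ^ (19 * L)) * (1 / (N : ℝ) ^ (L + 1)))
        (fun y _ => ?_)).trans ?_
      · refine (prob_exists_le_card _ _ (1 / (N : ℝ) ^ (L + 1)) (fun c _ => ?_)).trans ?_
        · exact wegner_prob hN2 hγ g2 g3 Λ (UU b) ((Finset.filter_subset _ _).trans hsub) L
            (gamma_card hN2 hL hγ g6 _ (hUcard b)) _
        · rw [Finset.card_univ, card_code]
          push_cast
          exact le_rfl
      · apply mul_le_mul_of_nonneg_right _ (by positivity)
        exact_mod_cast hUcard b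
    refine (prob_exists_le_card _ _ _ q1).trans ?_
    have hRr : (R.card : ℝ) ≤ (((L ^ 3) ^ d : ℕ) : ℝ) := by exact_mod_cast hRcard
    refine (mul_le_mul_of_nonneg_right hRr (by positivity)).trans (le_of_eq ?_)
    push_cast
    rw [← mul_assoc, ← mul_assoc, ← pow_mul, ← pow_add]
    congr 3
    ring
  -- numerics
  have hML3 : ((M * L : ℕ) : ℝ) ^ (2 * q) ≤ (L : ℝ) ^ (3 * q) := by
    have : (M * L) ^ (2 * q) ≤ L ^ (3 * q) := by
      rw [pow_mul, pow_mul]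
      apply Nat.pow_le_pow_left
      calc (M * L) ^ 2 = (M * M) * (L * L) := by ring
        _ ≤ L * (L * L) := Nat.mul_le_mul_right _ hML2
        _ = L ^ 3 := by ring
    exact_mod_cast this
  have hMLpos : (0 : ℝ) < ((M * L : ℕ) : ℝ) ^ (2 * q) := by
    have : 0 < M * L := Nat.mul_pos (by omega) (by omega)
    positivity
  have hgoal : (1 : ℝ) / (L : ℝ) ^ (3 * q) ≤ 1 / ((M * L : ℕ) : ℝ) ^ (2 * q) :=
    one_div_le_one_div_of_le hMLpos hML3
  have n1 : ((L : ℝ) ^ (14 * d)) * (P * P) ≤ 1 / 2 * (1 / (L : ℝ) ^ (3 * q)) := by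
    have hX : (0 : ℝ) < (L : ℝ) ^ (3 * q) := by positivity
    have h1 : (L : ℝ) ^ (2 * q) * (L : ℝ) ^ (2 * q) = (L : ℝ) ^ (3 * q) * (L : ℝ) ^ q := by
      rw [← pow_add, ← pow_add]; congr 1; ring
    have h2 : (L : ℝ) ^ (14 * d) * 2 ≤ (L : ℝ) ^ q := by
      calc (L : ℝ) ^ (14 * d) * 2 ≤ (L : ℝ) ^ (14 * d) * L :=
            mul_le_mul_of_nonneg_left (by linarith) (by positivity)
        _ = (L : ℝ) ^ (14 * d + 1) := by rw [pow_succ]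
        _ ≤ _ := pow_le_pow_right₀ (by linarith) (by omega)
    have h3 : 1 / (L : ℝ) ^ (2 * q) * (1 / (L : ℝ) ^ (2 * q)) =
        1 / ((L : ℝ) ^ (3 * q) * (L : ℝ) ^ q) := by
      rw [← h1, one_div_mul_one_div]
    rw [hP, h3, mul_one_div, one_div_mul_one_div, div_le_div_iff₀ (by positivity) (by positivity)]
    have := mul_le_mul_of_nonneg_left h2 hX.le
    linarith
  have n2 : (L : ℝ) ^ (6 * d) * (4 * (4 * d + 2) ^ (19 * L)) * (1 / (N : ℝ) ^ (L + 1)) ≤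
      1 / 2 * (1 / (L : ℝ) ^ (3 * q)) := by
    have hnat : 8 * L ^ (6 * d + 3 * q) * (4 * d + 2) ^ (19 * L) ≤ N ^ L := by
      have hL2 : L ≤ 2 ^ L := Nat.lt_two_pow_self.le
      calc 8 * L ^ (6 * d + 3 * q) * (4 * d + 2) ^ (19 * L)
          ≤ 8 ^ L * (2 ^ L) ^ (6 * d + 3 * q) * (4 * d + 2) ^ (19 * L) := by
            apply Nat.mul_le_mul_right
            exact Nat.mul_le_mul (Nat.le_self_pow (by omega) 8) (Nat.pow_le_pow_left hL2 _)
        _ = (8 * 2 ^ (6 * d + 3 * q) * (4 * d + 2) ^ 19) ^ L := by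
            rw [mul_pow, mul_pow, ← pow_mul, ← pow_mul, ← pow_mul, mul_comm L]
        _ ≤ N ^ L := Nat.pow_le_pow_left hN L
    have hr : 8 * (L : ℝ) ^ (6 * d + 3 * q) * (4 * d + 2) ^ (19 * L) ≤ (N : ℝ) ^ L := by
      exact_mod_cast hnat
    rw [mul_one_div, ← mul_one_div, one_div_mul_one_div, mul_one_div,
      div_le_div_iff₀ (by positivity) (by positivity)]
    have hNL : (N : ℝ) ^ L ≤ (N : ℝ) ^ (L + 1) := pow_le_pow_right₀ (by linarith) (by omega)
    have e1 : (L : ℝ) ^ (6 * d + 3 * q) = (L : ℝ) ^ (6 * d) * (L : ℝ) ^ (3 * q) := pow_add _ _ _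
    rw [e1] at hr
    nlinarith
  linarith

/-! ### Base case and the multiscale induction -/

lemma base_good {d N n : ℕ} (hd : 1 ≤ d) (hN : 2 ≤ N) (hn : 1 ≤ n) {γ E : ℝ} (hγ : 0 < γ)
    (hγB : (8 * d * N * 8 ^ d : ℝ) ^ 4 * γ ≤ 1) {v : (Fin d → ℤ) → ℝ}
    {R : Finset (Fin d → ℤ)} {x : Fin d → ℤ}
    (hcore : ∀ y ∈ R, 1 / (4 * N : ℝ) ≤ |v y - (E - 2 * d * γ)|) :
    Good γ E v (4 * n) (3 * n) R x := by
  obtain ⟨g1, g2, g3, g4, g5, g6⟩ := gamma_facts hd hN hγ hγB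
  have hd1 : (1 : ℝ) ≤ d := by exact_mod_cast hd
  have hNr : (2 : ℝ) ≤ N := by exact_mod_cast hN
  intro ψ F m hF hm h0 hA hb
  set ε : ℝ := 8 * d * N * γ with hε
  have hε0 : 0 ≤ ε := by positivity
  have hdN : (2 : ℝ) ≤ d * N := by nlinarith
  have hε2 : ε ≤ 1 / 2 := by
    set B : ℝ := 8 * d * N with hB
    have hB2 : 2 ≤ B := by rw [hB]; nlinarith
    have h3 : 2 * B ≤ B ^ 4 := by
      have : B ^ 2 ≤ B ^ 4 := pow_le_pow_right₀ (by linarith) (by norm_num)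
      nlinarith
    have : 2 * B * γ ≤ B ^ 4 * γ := mul_le_mul_of_nonneg_right h3 hγ.le
    linarith
  have key := iter_bound (fun y => |ψ y|) (fun y => near (4 * n) x y) 1 (by norm_num)
    (4 * N * F) ε (by positivity) hε0 hε2 (by
      intro y hxy m' hm' hy
      by_cases hyR : y ∈ R
      · have h1 := hA y hyR
        have h2 := abs_sum_stp_le (fun u => ψ (y + stp u)) m' (fun u => hy _ (near_stp y u))
        have h3 : (v y - (E - 2 * d * γ)) * ψ y =
            Aop γ E v ψ y + γ * ∑ u : Fin d × Bool, ψ (y + stp u) := by simp only [Aop]; ring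
        have h4 := congrArg abs h3
        rw [abs_mul] at h4
        have h5 : |Aop γ E v ψ y + γ * ∑ u : Fin d × Bool, ψ (y + stp u)| ≤
            F + γ * (2 * d * m') := by
          refine (abs_add_le _ _).trans ?_
          rw [abs_mul, abs_of_pos hγ]
          have := mul_le_mul_of_nonneg_left h2 hγ.le
          linarith
        have h6 : 1 / (4 * N : ℝ) * |ψ y| ≤ F + γ * (2 * d * m') := by
          refine le_trans ?_ (h4.le.trans h5)
          exact mul_le_mul_of_nonneg_right (hcore y hyR) (abs_nonneg _)
        rw [one_div, inv_mul_le_iff₀ (by positivity)] at h6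
        refine h6.trans (le_of_eq ?_)
        rw [hε]; ring
      · have : ψ y = 0 := h0 y hyR (near_mono hxy (by push_cast; exact le_rfl))
        try simp only
        rw [this, abs_zero]; positivity)
    (4 * n) x m hm (fun y hy => hb y (near_mono hy (by push_cast; linarith)))
    (fun y hy => near_mono hy (by push_cast; linarith))
  refine key.trans ?_
  have h7 : ε ^ (4 * n) ≤ γ ^ (3 * n) := by
    rw [pow_mul, pow_mul]
    apply pow_le_pow_left₀ (by positivity)
    have : ε ^ 4 = ((8 * d * N : ℝ) ^ 4 * γ) * γ ^ 3 := by rw [hε]; ring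
    rw [this]
    have : 0 < γ ^ 3 := by positivity
    nlinarith
  have h8 : 2 * (4 * N * F) ≤ F / γ ^ (4 * n) := by
    rw [le_div_iff₀ (by positivity)]
    have : γ ^ (4 * n) ≤ γ ^ 1 := pow_le_pow_of_le_one hγ.le (by linarith) (by omega)
    rw [pow_one] at this
    have h9 : 8 * N * γ ^ (4 * n) ≤ 1 := by nlinarith
    nlinarith
  have := mul_le_mul_of_nonneg_right h7 hm
  linarith

/-- ratio of scales -/
def Ms (k : ℕ) : ℕ := 2 ^ k * 1000

/-- length scales -/
def Ls : ℕ → ℕ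
  | 0 => 4 * 250000
  | k + 1 => Ms k * Ls k

/-- decay exponents -/
def es : ℕ → ℕ
  | 0 => 3 * 250000
  | k + 1 => es k * (Ms k - 60)

lemma Ms_ge (k : ℕ) : 1000 ≤ Ms k := by
  have : 1 ≤ 2 ^ k := Nat.one_le_two_pow
  unfold Ms; omega

lemma Ms_sq_le (k : ℕ) : Ms k * Ms k ≤ Ls k := by
  induction k with
  | zero => norm_num [Ms, Ls]
  | succ k ih =>
    have h1 := Ms_ge k
    have h2 : Ms (k + 1) = 2 * Ms k := by simp only [Ms, pow_succ]; ring
    rw [h2]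
    simp only [Ls]
    calc 2 * Ms k * (2 * Ms k) = Ms k * (4 * Ms k) := by ring
      _ ≤ Ms k * (Ms k * Ms k) := by
        apply Nat.mul_le_mul_left; nlinarith
      _ ≤ _ := Nat.mul_le_mul_left _ ih

lemma Ls_ge (k : ℕ) : 1000000 ≤ Ls k := by
  have h1 := Ms_ge k
  have h2 := Ms_sq_le k
  nlinarith

lemma Ls_succ_le (k : ℕ) : Ls (k + 1) ≤ Ls k ^ 2 := by
  have h1 := Ms_ge k
  have h2 := Ms_sq_le k
  simp only [Ls, pow_two]
  apply Nat.mul_le_mul_right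
  nlinarith

lemma es_inv (k : ℕ) : (2 * 2 ^ k + 1) * Ls k ≤ 4 * 2 ^ k * es k := by
  induction k with
  | zero => norm_num [Ls, es]
  | succ k ih =>
    have hK : 1 ≤ 2 ^ k := Nat.one_le_two_pow
    set K := 2 ^ k with hKd
    have hM : Ms k = K * 1000 := rfl
    obtain ⟨m, hm⟩ : ∃ m, Ms k = m + 60 := ⟨Ms k - 60, by have := Ms_ge k; omega⟩
    have hm2 : Ms k - 60 = m := by omega
    simp only [Ls, es, pow_succ, ← hKd, hm2]
    have h1 : (2 * (K * 2) + 1) * Ms k ≤ 2 * m * (2 * K + 1) := by nlinarith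
    calc (2 * (K * 2) + 1) * (Ms k * Ls k) = ((2 * (K * 2) + 1) * Ms k) * Ls k := by ring
      _ ≤ (2 * m * (2 * K + 1)) * Ls k := Nat.mul_le_mul_right _ h1
      _ = 2 * m * ((2 * K + 1) * Ls k) := by ring
      _ ≤ 2 * m * (4 * K * es k) := Nat.mul_le_mul_left _ ih
      _ = _ := by ring

lemma Ls_le_es (k : ℕ) : Ls k ≤ 2 * es k := by
  have h1 := es_inv k
  have hK : 1 ≤ 2 ^ k := Nat.one_le_two_pow
  nlinarith

lemma es_le_Ls (k : ℕ) : es k ≤ Ls k := by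
  induction k with
  | zero => norm_num [Ls, es]
  | succ k ih =>
    simp only [Ls, es]
    rw [mul_comm]
    exact Nat.mul_le_mul (by omega) ih

lemma msa {d N q : ℕ} (a : Fin d) (hq : 15 * d ≤ q) (hN2 : 2 ≤ N)
    (hN : 8 * 2 ^ (6 * d + 3 * q) * (4 * d + 2) ^ 19 ≤ N)
    (hN' : (2 * 1000000 + 1) ^ d * 1000000 ^ (2 * q) ≤ N)
    {γ E : ℝ} (hγ : 0 < γ) (hγB : (8 * d * N * 8 ^ d : ℝ) ^ 4 * γ ≤ 1)
    (Λ : Finset (Fin d → ℤ)) (k : ℕ) :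
    ∀ x lo hi, Adm a (Ls k) x lo hi → Finset.Icc lo hi ⊆ Λ →
      prob (fun ω : Λ → Fin N => ¬ Good γ E (potential N Λ ω) (Ls k) (es k) (Finset.Icc lo hi) x)
        ≤ 1 / (Ls k : ℝ) ^ (2 * q) := by
  induction k with
  | zero =>
    intro x lo hi hAdm hsub
    have hd : 1 ≤ d := by have := a.2; omega
    have hNr : (2 : ℝ) ≤ N := by exact_mod_cast hN2
    have hcard : (Finset.Icc lo hi).card ≤ (2 * 1000000 + 1) ^ d := by
      apply card_Icc_le
      intro i
      have := hAdm.1 i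
      simp only [Ls] at this
      omega
    calc _ ≤ prob (fun ω : Λ → Fin N => ∃ y ∈ Finset.Icc lo hi,
          |potential N Λ ω y - (E - 2 * d * γ)| < 1 / (4 * N)) := by
          apply prob_mono
          intro ω hω
          by_contra hc
          push Not at hc
          exact hω (base_good hd hN2 (by norm_num) hγ hγB hc)
      _ ≤ (Finset.Icc lo hi).card * (1 / (N : ℝ)) :=
          prob_exists_le_card _ _ _ (fun y hy => prob_core hN2 Λ y (hsub hy) _)
      _ ≤ 1 / (Ls 0 : ℝ) ^ (2 * q) := by
          have e1 : (Ls 0 : ℝ) = ((1000000 : ℕ) : ℝ) := by norm_num [Ls]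
          rw [e1, mul_one_div, div_le_div_iff₀ (by positivity) (by positivity), one_mul]
          have : (Finset.Icc lo hi).card * 1000000 ^ (2 * q) ≤ N :=
            (Nat.mul_le_mul_right _ hcard).trans hN'
          exact_mod_cast this
  | succ k ih =>
    intro x lo hi hAdm hsub
    exact step_prob a (Ms_ge k) (Ms_sq_le k) (Ls_le_es k) hq hN2 hN hγ hγB Λ ih x lo hi hAdm hsub

/-! ### Local density of states -/

lemma trace_lemma {n : Type*} [Fintype n] [DecidableEq n] {M : Matrix n n ℝ} (hM : M.IsHermitian)
    (E δ : ℝ) (hδ : 0 ≤ δ) :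
    ∃ t : n → ℝ, (countEigIn hM (E - δ) (E + δ) : ℝ) = ∑ x, t x ∧
      ∀ x, 0 ≤ t x ∧ t x ≤ 1 ∧ ∃ φ : n → ℝ, φ x = t x ∧ (∀ y, φ y ^ 2 ≤ t x) ∧
        ∀ y, (M.mulVec φ y - E * φ y) ^ 2 ≤ δ ^ 2 * t x := by
  classical
  set u : n → n → ℝ := fun i y => hM.eigenvectorBasis i y with hu
  have ho : ∀ i j, ∑ y, u i y * u j y = if i = j then 1 else 0 := by
    intro i j
    have h := orthonormal_iff_ite.1 hM.eigenvectorBasis.orthonormal i j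
    rw [← h]
    simp only [PiLp.inner_apply, hu]
    apply Finset.sum_congr rfl
    intro y _
    simp [mul_comm]
  set I := Finset.univ.filter fun i => hM.eigenvalues i ∈ Set.Icc (E - δ) (E + δ) with hI
  have hsq : ∀ c : n → ℝ, ∑ y, (∑ i ∈ I, c i * u i y) ^ 2 = ∑ i ∈ I, c i ^ 2 := by
    intro c
    have e1 : ∀ y, (∑ i ∈ I, c i * u i y) ^ 2 =
        ∑ i ∈ I, ∑ j ∈ I, c i * c j * (u i y * u j y) := by
      intro y
      rw [pow_two, Finset.sum_mul_sum]
      apply Finset.sum_congr rfl; intro i _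
      apply Finset.sum_congr rfl; intro j _
      ring
    rw [Finset.sum_congr rfl (fun y _ => e1 y), Finset.sum_comm]
    apply Finset.sum_congr rfl; intro i hi
    rw [Finset.sum_comm]
    rw [Finset.sum_eq_single i]
    · rw [← Finset.mul_sum, ho, if_pos rfl]; ring
    · intro j _ hj
      rw [← Finset.mul_sum, ho, if_neg hj.symm, mul_zero]
    · intro h; exact absurd hi h
  have hle : ∀ (f : n → ℝ) y, f y ^ 2 ≤ ∑ y, f y ^ 2 := fun f y =>
    Finset.single_le_sum (f := fun y => f y ^ 2) (fun _ _ => sq_nonneg _) (Finset.mem_univ y)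
  refine ⟨fun x => ∑ i ∈ I, u i x ^ 2, ?_, fun x => ?_⟩
  · rw [Finset.sum_comm]
    have : ∀ i ∈ I, ∑ x, u i x ^ 2 = 1 := by
      intro i _
      have := ho i i
      rw [if_pos rfl] at this
      rw [← this]
      exact Finset.sum_congr rfl fun y _ => pow_two _
    rw [Finset.sum_congr rfl this, Finset.sum_const, nsmul_eq_mul, mul_one]
    unfold countEigIn
    rw [hI]
  · set t := ∑ i ∈ I, u i x ^ 2 with ht
    have ht0 : 0 ≤ t := Finset.sum_nonneg fun _ _ => sq_nonneg _
    set φ : n → ℝ := fun y => ∑ i ∈ I, u i x * u i y with hφ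
    have hφx : φ x = t := Finset.sum_congr rfl fun i _ => (pow_two _).symm
    have hφs : ∑ y, φ y ^ 2 = t := hsq (fun i => u i x)
    have hφy : ∀ y, φ y ^ 2 ≤ t := fun y => (hle φ y).trans hφs.le
    refine ⟨ht0, ?_, φ, hφx, hφy, ?_⟩
    · have := hφy x
      rw [hφx] at this
      nlinarith
    · have hMφ : ∀ y, M.mulVec φ y - E * φ y =
          ∑ i ∈ I, ((hM.eigenvalues i - E) * u i x) * u i y := by
        intro y
        have e1 : ∀ i, ∑ z, M y z * u i z = hM.eigenvalues i * u i y := by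
          intro i
          have := congrFun (hM.mulVec_eigenvectorBasis i) y
          simpa [Matrix.mulVec, dotProduct, hu] using this
        have e2 : M.mulVec φ y = ∑ i ∈ I, u i x * (hM.eigenvalues i * u i y) := by
          simp only [Matrix.mulVec, dotProduct, hφ, Finset.mul_sum]
          rw [Finset.sum_comm]
          apply Finset.sum_congr rfl; intro i _
          rw [← e1, Finset.mul_sum]
          apply Finset.sum_congr rfl; intro z _
          ring
        rw [e2, hφ, Finset.mul_sum, ← Finset.sum_sub_distrib]
        apply Finset.sum_congr rfl; intro i _
        ring
      intro y
      rw [hMφ y]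
      refine (hle (fun y => ∑ i ∈ I, ((hM.eigenvalues i - E) * u i x) * u i y) y).trans ?_
      rw [hsq]
      show _ ≤ δ ^ 2 * ∑ i ∈ I, u i x ^ 2
      rw [Finset.mul_sum]
      apply Finset.sum_le_sum
      intro i hi
      rw [mul_pow]
      apply mul_le_mul_of_nonneg_right _ (sq_nonneg _)
      have := (Finset.mem_filter.1 hi).2
      rw [Set.mem_Icc] at this
      apply sq_le_sq'
      · linarith
      · linarith

lemma ham_mulVec {d : ℕ} (γ E : ℝ) (v : (Fin d → ℤ) → ℝ) (Λ : Finset (Fin d → ℤ))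
    (ψ : (Fin d → ℤ) → ℝ) (h0 : ∀ y, y ∉ Λ → ψ y = 0) (x : Λ) :
    Aop γ E v ψ x = (hamOn d γ v Λ).mulVec (fun y => ψ y) x - E * ψ x := by
  classical
  have e1 : (hamOn d γ v Λ).mulVec (fun y => ψ y) x =
      ∑ y ∈ Λ, hamEntry d γ v x y * ψ y := by
    simp only [Matrix.mulVec, dotProduct, hamOn, Matrix.of_apply]
    exact Finset.sum_coe_sort Λ (fun y => hamEntry d γ v x y * ψ y)
  rw [e1]
  simp only [Aop, hop_sum Λ ψ h0]
  have e2 : ∀ y, hamEntry d γ v x y * ψ y = (if (x : Fin d → ℤ) = y then (2 * d * γ + v x) * ψ y else 0)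
      - γ * ((if dist1 (x : Fin d → ℤ) y = 1 then 1 else 0) * ψ y) := by
    intro y
    unfold hamEntry
    split_ifs <;> ring
  rw [Finset.sum_congr rfl (fun y _ => e2 y), Finset.sum_sub_distrib, ← Finset.mul_sum,
    Finset.sum_ite_eq, if_pos x.2]
  ring

lemma ldos {d : ℕ} (γ E δ : ℝ) (hδ : 0 ≤ δ) (v : (Fin d → ℤ) → ℝ) (Λ : Finset (Fin d → ℤ)) :
    ∃ t : Λ → ℝ, (countEigIn (hamOn_isHermitian d γ v Λ) (E - δ) (E + δ) : ℝ) = ∑ x, t x ∧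
      ∀ x : Λ, 0 ≤ t x ∧ t x ≤ 1 ∧ ∃ φ : (Fin d → ℤ) → ℝ, (∀ y, y ∉ Λ → φ y = 0) ∧ φ x = t x ∧
        (∀ y, |φ y| ≤ √(t x)) ∧ ∀ y ∈ Λ, |Aop γ E v φ y| ≤ δ * √(t x) := by
  classical
  obtain ⟨t, ht, h⟩ := trace_lemma (hamOn_isHermitian d γ v Λ) E δ hδ
  refine ⟨t, ht, fun x => ?_⟩
  obtain ⟨h0, h1, φ, hφ, hφ2, hφ3⟩ := h x
  refine ⟨h0, h1, fun y => if hy : y ∈ Λ then φ ⟨y, hy⟩ else 0, fun y hy => dif_neg hy, ?_, ?_, ?_⟩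
  · simp [hφ]
  · intro y
    by_cases hy : y ∈ Λ
    · simp only [dif_pos hy]; exact Real.abs_le_sqrt (hφ2 _)
    · simp only [dif_neg hy, abs_zero]; positivity
  · intro y hy
    have := ham_mulVec γ E v Λ (fun y => if hy : y ∈ Λ then φ ⟨y, hy⟩ else 0)
      (fun y hy => dif_neg hy) ⟨y, hy⟩
    simp only at this
    rw [this]
    have e1 : (fun z : Λ => if hy : (z : Fin d → ℤ) ∈ Λ then φ ⟨z, hy⟩ else 0) = φ := by
      funext z; simp
    rw [e1, dif_pos hy]
    have h4 := Real.abs_le_sqrt (hφ3 ⟨y, hy⟩)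
    rwa [Real.sqrt_mul (sq_nonneg _), Real.sqrt_sq hδ] at h4

lemma expect_count_le {d N : ℕ} (hN : 0 < N) (γ E δ : ℝ) (hδ : 0 ≤ δ) (Λ : Finset (Fin d → ℤ))
    (P c : ℝ) (hc : 0 ≤ c) (B : (Fin d → ℤ) → (Λ → Fin N) → Prop)
    (hB : ∀ x ∈ Λ, prob (B x) ≤ P)
    (hgood : ∀ x ∈ Λ, ∀ ω, ¬ B x ω → ∀ t : ℝ, 0 ≤ t → t ≤ 1 → ∀ φ : (Fin d → ℤ) → ℝ,
      (∀ y, y ∉ Λ → φ y = 0) → φ x = t → (∀ y, |φ y| ≤ √t) →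
      (∀ y ∈ Λ, |Aop γ E (potential N Λ ω) φ y| ≤ δ * √t) → t ≤ c) :
    expect (fun ω : Λ → Fin N =>
        (countEigIn (hamOn_isHermitian d γ (potential N Λ ω) Λ) (E - δ) (E + δ) : ℝ))
      ≤ (Λ.card : ℝ) * (P + c) := by
  have : Nonempty (Fin N) := ⟨⟨0, hN⟩⟩
  choose t ht1 ht2 using fun ω : Λ → Fin N => ldos γ E δ hδ (potential N Λ ω) Λ
  have e1 : (fun ω : Λ → Fin N =>
        (countEigIn (hamOn_isHermitian d γ (potential N Λ ω) Λ) (E - δ) (E + δ) : ℝ)) =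
      fun ω => ∑ x : Λ, t ω x := funext ht1
  rw [e1, expect_eq_sum]
  calc ∑ x : Λ, expect (fun ω => t ω x) ≤ ∑ _x : Λ, (P + c) := by
        apply Finset.sum_le_sum
        intro x _
        refine (expect_le_of_event (B x) c hc (fun ω => (ht2 ω x).2.1) ?_).trans
          (by linarith [hB x x.2])
        intro ω hω
        obtain ⟨h0, h1, φ, hφ0, hφ1, hφ2, hφ3⟩ := ht2 ω x
        exact hgood x x.2 ω hω _ h0 h1 φ hφ0 hφ1 hφ2 hφ3
    _ = _ := by simp; ring


/-! ### The final theorem -/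

lemma sqrt_trick {t A : ℝ} (ht : 0 ≤ t) (hA : 0 ≤ A) (h : t ≤ A * √t) : t ≤ A ^ 2 := by
  have h1 := Real.sqrt_nonneg t
  have h2 := Real.mul_self_sqrt ht
  have h3 : √t ≤ A := by
    rcases h1.eq_or_lt with h0 | h0
    · rw [← h0]; exact hA
    · nlinarith
  nlinarith

lemma mid_case {d N : ℕ} (hd : 1 ≤ d) (hN2 : 2 ≤ N) {γ E δ : ℝ} (hγ : 0 < γ)
    (hγB : (8 * d * N * 8 ^ d : ℝ) ^ 4 * γ ≤ 1) (hδ : 0 ≤ δ) (hδγ : δ ≤ γ)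
    (Λ : Finset (Fin d → ℤ)) :
    expect (fun ω : Λ → Fin N =>
        (countEigIn (hamOn_isHermitian d γ (potential N Λ ω) Λ) (E - δ) (E + δ) : ℝ))
      ≤ (Λ.card : ℝ) * (1 / N + 1 / N) := by
  obtain ⟨g1, g2, g3, g4, g5, g6⟩ := gamma_facts hd hN2 hγ hγB
  have hNR : (2 : ℝ) ≤ N := by exact_mod_cast hN2
  have hdR : (1 : ℝ) ≤ d := by exact_mod_cast hd
  have hN0 : (0 : ℝ) < N := by linarith
  refine expect_count_le (by omega) γ E δ hδ Λ (1 / N) (1 / N) (by positivity)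
    (fun x ω => |potential N Λ ω x - (E - 2 * d * γ)| < 1 / (4 * N))
    (fun x hx => prob_core hN2 Λ x hx _) ?_
  intro x hx ω hB t ht0 ht1 φ h0 hφx hφ hA
  rw [not_lt] at hB
  have h1 := hA x hx
  have h2 := abs_sum_stp_le (fun u => φ (x + stp u)) (√t) (fun u => hφ _)
  have hst := Real.sqrt_nonneg t
  have h3 : |(2 * d * γ + potential N Λ ω x - E) * t| ≤ δ * √t + γ * (2 * d * √t) := by
    unfold Aop at h1
    rw [hφx] at h1
    have e : (2 * d * γ + potential N Λ ω x - E) * t =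
      ((2 * d * γ + potential N Λ ω x - E) * t - γ * ∑ u : Fin d × Bool, φ (x + stp u))
        + γ * ∑ u : Fin d × Bool, φ (x + stp u) := by ring
    rw [e]
    refine (abs_add_le _ _).trans (add_le_add h1 ?_)
    rw [abs_mul, abs_of_pos hγ]
    exact mul_le_mul_of_nonneg_left h2 hγ.le
  rw [abs_mul, abs_of_nonneg ht0] at h3
  have h4 : 1 / (4 * N) * t ≤ δ * √t + γ * (2 * d * √t) := by
    refine le_trans (mul_le_mul_of_nonneg_right ?_ ht0) h3
    rw [show 2 * d * γ + potential N Λ ω x - E = potential N Λ ω x - (E - 2 * d * γ) by ring]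
    exact hB
  have h5 : 1 / (4 * N) * t ≤ 3 * d * γ * √t := by
    have : δ * √t ≤ d * γ * √t := by
      apply mul_le_mul_of_nonneg_right _ hst
      nlinarith
    linarith
  have h6 : t ≤ (12 * d * N * γ) * √t := by
    have : t = 4 * N * (1 / (4 * N) * t) := by field_simp
    rw [this]
    have := mul_le_mul_of_nonneg_left h5 (show (0 : ℝ) ≤ 4 * N by positivity)
    rw [← (by field_simp : t = 4 * N * (1 / (4 * N) * t))] at this ⊢
    linarith
  have h7 := sqrt_trick ht0 (by positivity) h6
  refine h7.trans ?_
  rw [le_div_iff₀ hN0]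
  have h8 : (12 * d * N * γ) ^ 2 * N ≤ (8 * d * N : ℝ) ^ 4 * γ * γ := by
    have : (12 * d * N * γ) ^ 2 * N = (144 * (d ^ 2 * 1) * (N ^ 3 * 1)) * γ ^ 2 := by ring
    rw [this]
    have : (8 * d * N : ℝ) ^ 4 * γ * γ = (4096 * (d ^ 2 * d ^ 2) * (N ^ 3 * N)) * γ ^ 2 := by ring
    rw [this]
    gcongr
    · norm_num
    · exact one_le_pow₀ hdR
    · linarith
  nlinarith

lemma diam_coord {d : ℕ} (lo hi : Fin d → ℤ) (L : ℕ) (hL : 0 < L) (hd : 1 ≤ d)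
    (h : d * L ≤ diam1 (Finset.Icc lo hi)) : ∃ a, lo a + L ≤ hi a := by
  by_contra hcon
  push Not at hcon
  have : diam1 (Finset.Icc lo hi) < d * L := by
    unfold diam1
    rw [Finset.sup_lt_iff (by simp only [Nat.bot_eq_zero]; positivity)]
    rintro ⟨p1, p2⟩ hp
    rw [Finset.mem_product, mem_Icc_pi, mem_Icc_pi] at hp
    simp only at hp ⊢
    unfold dist1
    have : Nonempty (Fin d) := ⟨⟨0, hd⟩⟩
    calc ∑ i, (p1 i - p2 i).natAbs < ∑ _i : Fin d, L := by
          apply Finset.sum_lt_sum_of_nonempty Finset.univ_nonempty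
          intro i _
          have h1 := hp.1 i
          have h2 := hp.2 i
          have h3 := hcon i
          omega
      _ = d * L := by simp
  omega

lemma num_final {d P q L : ℕ} {γ : ℝ} (hd : 1 ≤ d) (hq : P + d * P + 1 ≤ q) (hL : 2 ≤ L)
    (hγ : 0 < γ) (hγP : 8 * (8 * d : ℝ) ^ P * γ ≤ 1) :
    1 / (L : ℝ) ^ (2 * q) + 4 * γ ^ L ≤ 1 / (2 * d * (L : ℝ) ^ 2) ^ P := by
  have hLR : (2 : ℝ) ≤ L := by exact_mod_cast hL
  have hdR : (1 : ℝ) ≤ d := by exact_mod_cast hd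
  have hS : (0 : ℝ) < (2 * d * (L : ℝ) ^ 2) ^ P := by positivity
  have h1 : 2 * (2 * d * (L : ℝ) ^ 2) ^ P ≤ (L : ℝ) ^ (2 * q) := by
    have hd2 : (d : ℝ) ≤ 2 ^ d := by exact_mod_cast d.lt_two_pow_self.le
    have e1 : (2 * d : ℝ) ≤ L ^ (d + 1) := by
      calc (2 * d : ℝ) ≤ 2 * 2 ^ d := by linarith
        _ = 2 ^ (d + 1) := by ring
        _ ≤ _ := by gcongr
    calc 2 * (2 * d * (L : ℝ) ^ 2) ^ P ≤ L * (L ^ (d + 1) * (L : ℝ) ^ 2) ^ P := by gcongr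
      _ = (L : ℝ) ^ ((d + 3) * P + 1) := by
          rw [← pow_add, ← pow_mul, pow_succ]; ring_nf
      _ ≤ _ := by
          apply pow_le_pow_right₀ (by linarith)
          have : d * P ≥ P := Nat.le_mul_of_pos_left _ hd
          nlinarith
  have h2 : 8 * (2 * d * (L : ℝ) ^ 2) ^ P * γ ^ L ≤ 1 := by
    have hL2 : (L : ℝ) ≤ 2 ^ L := by exact_mod_cast L.lt_two_pow_self.le
    calc 8 * (2 * d * (L : ℝ) ^ 2) ^ P * γ ^ L
        ≤ 8 ^ L * ((2 * d) ^ L * ((2 : ℝ) ^ L) ^ 2) ^ P * γ ^ L := by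
          gcongr
          · exact le_self_pow₀ (by norm_num) (by omega)
          · exact le_self_pow₀ (by linarith) (by omega)
      _ = (8 * (8 * d : ℝ) ^ P * γ) ^ L := by
          rw [mul_pow (8 * (8 * (d : ℝ)) ^ P), mul_pow 8 ((8 * (d : ℝ)) ^ P)]
          congr 2
          rw [← pow_mul, ← pow_mul, mul_comm P L, pow_mul (8 * (d : ℝ)) L P]
          congr 1
          rw [mul_comm L 2, pow_mul, ← mul_pow]
          congr 1
          ring
      _ ≤ 1 := pow_le_one₀ (by positivity) hγP
  have hLq : (0 : ℝ) < (L : ℝ) ^ (2 * q) := by positivity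
  have e1 : 1 / (L : ℝ) ^ (2 * q) ≤ 1 / (2 * (2 * d * (L : ℝ) ^ 2) ^ P) :=
    one_div_le_one_div_of_le (by positivity) h1
  have e2 : 4 * γ ^ L ≤ 1 / (2 * (2 * d * (L : ℝ) ^ 2) ^ P) := by
    rw [le_div_iff₀ (by positivity)]
    linarith
  calc _ ≤ _ := add_le_add e1 e2
    _ = _ := by field_simp; norm_num

lemma rpow_final {s S p : ℝ} {P : ℕ} (hs : 1 ≤ s) (hsS : s ≤ S) (hpP : p ≤ P) :
    1 / S ^ P ≤ s ^ (-p) := by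
  rw [Real.rpow_neg (by linarith), ← one_div]
  apply one_div_le_one_div_of_le
  · exact Real.rpow_pos_of_pos (by linarith) _
  · calc s ^ p ≤ s ^ (P : ℝ) := Real.rpow_le_rpow_of_exponent_le hs hpP
      _ = s ^ P := Real.rpow_natCast _ _
      _ ≤ S ^ P := by gcongr

lemma big_case {d N q : ℕ} (hd : 1 ≤ d) (hN2 : 2 ≤ N) (hq : 15 * d ≤ q)
    (hN : 8 * 2 ^ (6 * d + 3 * q) * (4 * d + 2) ^ 19 ≤ N)
    (hN' : (2 * 1000000 + 1) ^ d * 1000000 ^ (2 * q) ≤ N)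
    {γ E δ : ℝ} (hγ : 0 < γ)
    (hγB : (8 * d * N * 8 ^ d : ℝ) ^ 4 * γ ≤ 1) (hδ : 0 ≤ δ) (k : ℕ)
    (hδγ : δ ≤ γ ^ (2 * Ls k))
    (lo hi : Fin d → ℤ) (hdiam : d * Ls k ≤ diam1 (Finset.Icc lo hi)) :
    expect (fun ω : ↥(Finset.Icc lo hi) → Fin N =>
        (countEigIn (hamOn_isHermitian d γ (potential N (Finset.Icc lo hi) ω) (Finset.Icc lo hi))
          (E - δ) (E + δ) : ℝ))
      ≤ ((Finset.Icc lo hi).card : ℝ) * (1 / (Ls k : ℝ) ^ (2 * q) + 4 * γ ^ (Ls k)) := by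
  obtain ⟨g1, g2, g3, g4, g5, g6⟩ := gamma_facts hd hN2 hγ hγB
  have hLk := Ls_ge k
  obtain ⟨a, ha⟩ := diam_coord lo hi (Ls k) (by omega) hd hdiam
  set L := Ls k with hL
  set e := es k with he
  have heL : L ≤ 2 * e := Ls_le_es k
  have heL' : e ≤ L := es_le_Ls k
  set lo' : (Fin d → ℤ) → Fin d → ℤ := fun x i => max (lo i) (x i - L) with hlo
  set hi' : (Fin d → ℤ) → Fin d → ℤ := fun x i => min (hi i) (x i + L) with hhi
  have hsub : ∀ x, Finset.Icc (lo' x) (hi' x) ⊆ Finset.Icc lo hi := by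
    intro x y hy
    rw [mem_Icc_pi] at hy ⊢
    intro i
    have := hy i
    simp only [hlo, hhi] at this
    omega
  refine expect_count_le (by omega) γ E δ hδ _ _ _ (by positivity)
    (fun x ω => ¬ Good γ E (potential N (Finset.Icc lo hi) ω) L e
      (Finset.Icc (lo' x) (hi' x)) x) ?_ ?_
  · intro x hx
    rw [mem_Icc_pi] at hx
    refine msa a hq hN2 hN hN' hγ hγB _ k x _ _ ⟨?_, ?_⟩ (hsub x)
    · intro i
      have := hx i
      simp only [hlo, hhi]
      omega
    · have := hx a
      simp only [hlo, hhi]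
      omega
  · intro x hx ω hB t ht0 ht1 φ h0 hφx hφ hA
    rw [not_not] at hB
    have hst := Real.sqrt_nonneg t
    have h1 := hB φ (δ * √t) (√t) (by positivity) hst ?_ (fun y hy => hA y (hsub x hy))
      (fun y _ => hφ y)
    · rw [hφx, abs_of_nonneg ht0] at h1
      have hγ1 : γ ≤ 1 := by linarith
      have h2 : δ * √t / γ ^ L ≤ γ ^ e * √t := by
        rw [div_le_iff₀ (by positivity)]
        calc δ * √t ≤ γ ^ (2 * L) * √t := by gcongr
          _ = γ ^ L * √t * γ ^ L := by ring
          _ ≤ γ ^ e * √t * γ ^ L := by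
              gcongr ?_ * _ * _
              exact pow_le_pow_of_le_one hγ.le hγ1 heL'
      have h3 : t ≤ (2 * γ ^ e) * √t := by linarith
      refine (sqrt_trick ht0 (by positivity) h3).trans ?_
      calc (2 * γ ^ e) ^ 2 = 4 * γ ^ (2 * e) := by ring
        _ ≤ 4 * γ ^ L := by
            gcongr ?_ * ?_
            exact pow_le_pow_of_le_one hγ.le hγ1 heL
    · intro y hy hnear
      apply h0
      intro hyΛ
      apply hy
      rw [mem_Icc_pi] at hyΛ ⊢
      intro i
      have q1 := hyΛ i
      have q2 := abs_le.1 (hnear i)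
      simp only [hlo, hhi]
      omega

lemma Ls_gt (k : ℕ) : k < Ls k := by
  induction k with
  | zero => have := Ls_ge 0; omega
  | succ k ih =>
    have h1 := Ms_ge k
    have : Ls (k + 1) = Ms k * Ls k := rfl
    rw [this]
    nlinarith

lemma exists_scale (s c : ℝ) (hc : 1 ≤ c) (hs : c * Ls 0 ≤ s) :
    ∃ k, c * Ls k ≤ s ∧ s ≤ c * (Ls k : ℝ) ^ 2 := by
  classical
  have hex : ∃ k, s < c * Ls k := by
    obtain ⟨k, hk⟩ := exists_nat_gt s
    refine ⟨k, hk.trans ?_⟩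
    have : (k : ℝ) < Ls k := by exact_mod_cast Ls_gt k
    nlinarith [(Nat.cast_nonneg (Ls k) : (0 : ℝ) ≤ Ls k)]
  have h1 := Nat.find_spec hex
  have h2 := fun m => Nat.find_min hex (m := m)
  rcases hk : Nat.find hex with _ | k
  · rw [hk] at h1; linarith
  · rw [hk] at h1
    refine ⟨k, not_lt.1 (h2 k (by omega)), h1.le.trans ?_⟩
    have : (Ls (k + 1) : ℝ) ≤ (Ls k : ℝ) ^ 2 := by exact_mod_cast Ls_succ_le k
    gcongr

/-- **Theorem 1.1** (log-Hölder continuity of the density of states).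
For every dimension `d ≥ 1` there is `p₀` such that for all `p ≥ p₀` there is `N₀`
(depending on `p`) such that for all integers `N ≥ N₀` there is `γ₀ ∈ (0,1)` (depending
on `N`) such that for all `γ ∈ (0,γ₀]`, every finite rectangle `Λ ⊂ ℤ^d`, every `E ∈ ℝ`
and every `δ` with `γ^(diam Λ / 2) ≤ δ < 1`, the expected number of eigenvalues of the
Anderson Hamiltonian in `I_δ(E) = [E-δ,E+δ]` is at most `|Λ| (log_γ δ)^(-p)`. -/
theorem density_of_states_logHolder :
    ∀ d : ℕ, 1 ≤ d →
    ∃ p₀ : ℝ, ∀ p : ℝ, p₀ ≤ p →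
    ∃ N₀ : ℕ, ∀ N : ℕ, N₀ ≤ N →
    ∃ γ₀ : ℝ, 0 < γ₀ ∧ γ₀ < 1 ∧
    ∀ γ : ℝ, 0 < γ → γ ≤ γ₀ →
    ∀ Λ : Finset (Fin d → ℤ), IsRect Λ →
    ∀ E δ : ℝ, γ ^ ((diam1 Λ : ℝ) / 2) ≤ δ → δ < 1 →
    expect (fun ω : ↥Λ → Fin N =>
        (countEigIn (hamOn_isHermitian d γ (potential N Λ ω) Λ) (E - δ) (E + δ) : ℝ))
      ≤ (Λ.card : ℝ) * (Real.log δ / Real.log γ) ^ (-p) := by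
  intro d hd
  refine ⟨0, fun p hp => ?_⟩
  obtain ⟨P, hpP⟩ := exists_nat_ge p
  set q := 15 * d + P + d * P + 1 with hq
  refine ⟨2 + 8 * 2 ^ (6 * d + 3 * q) * (4 * d + 2) ^ 19 +
    (2 * 1000000 + 1) ^ d * 1000000 ^ (2 * q) + 2 * (2 * d * 1000000) ^ P, fun N hN => ?_⟩
  have hN2 : 2 ≤ N := by omega
  have hNa : 8 * 2 ^ (6 * d + 3 * q) * (4 * d + 2) ^ 19 ≤ N := by omega
  have hNb : (2 * 1000000 + 1) ^ d * 1000000 ^ (2 * q) ≤ N := by omega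
  have hNc : 2 * (2 * d * 1000000) ^ P ≤ N := by omega
  have hNR : (2 : ℝ) ≤ N := by exact_mod_cast hN2
  have hdR : (1 : ℝ) ≤ d := by exact_mod_cast hd
  have hD1 : (1 : ℝ) ≤ 8 * (8 * d : ℝ) ^ P := by
    have : (1 : ℝ) ≤ (8 * d : ℝ) ^ P := one_le_pow₀ (by linarith)
    linarith
  have hD0 : (1 : ℝ) ≤ (8 * d * N * 8 ^ d : ℝ) ^ 4 := by
    apply one_le_pow₀
    have h8 : (1 : ℝ) ≤ 8 ^ d := one_le_pow₀ (by norm_num)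
    have : (1 : ℝ) ≤ 8 * d * N := by nlinarith
    nlinarith
  refine ⟨1 / ((8 * d * N * 8 ^ d : ℝ) ^ 4 + 8 * (8 * d : ℝ) ^ P), by positivity, ?_, ?_⟩
  · rw [div_lt_one (by positivity)]
    linarith
  intro γ hγ hγ0 Λ hΛ E δ hδ hδ1
  rw [le_div_iff₀ (by positivity), mul_add] at hγ0
  have hγB : (8 * d * N * 8 ^ d : ℝ) ^ 4 * γ ≤ 1 := by
    have : 0 ≤ γ * (8 * (8 * d : ℝ) ^ P) := by positivity
    linarith
  have hγP : 8 * (8 * d : ℝ) ^ P * γ ≤ 1 := by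
    have : 0 ≤ γ * (8 * d * N * 8 ^ d : ℝ) ^ 4 := by positivity
    linarith
  obtain ⟨g1, g2, g3, g4, g5, g6⟩ := gamma_facts hd hN2 hγ hγB
  have hγ1 : γ < 1 := by linarith
  have hδ0 : 0 < δ := (Real.rpow_pos_of_pos hγ _).trans_le hδ
  have hlγ : Real.log γ < 0 := Real.log_neg hγ hγ1
  have hlδ : Real.log δ < 0 := Real.log_neg hδ0 hδ1
  set s := Real.log δ / Real.log γ with hs
  have hs0 : 0 < s := div_pos_of_neg_of_neg hlδ hlγ
  have hsδ : δ = γ ^ s := by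
    rw [Real.rpow_def_of_pos hγ, hs, mul_div_cancel₀ _ hlγ.ne, Real.exp_log hδ0]
  have hdiam : s ≤ (diam1 Λ : ℝ) / 2 := by
    rw [hsδ] at hδ
    exact (Real.rpow_le_rpow_left_iff_of_base_lt_one hγ hγ1).1 hδ
  have hcard : (0 : ℝ) ≤ Λ.card := Nat.cast_nonneg _
  by_cases c1 : s ≤ 1
  · refine (expect_count_le (by omega) γ E δ hδ0.le Λ 0 1 (by norm_num) (fun _ _ => False)
      (fun x _ => (prob_false (fun _ h => h)).le) (fun _ _ _ _ t _ h _ _ _ _ _ => h)).trans ?_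
    apply mul_le_mul_of_nonneg_left _ hcard
    rw [zero_add]
    exact Real.one_le_rpow_of_pos_of_le_one_of_nonpos hs0 c1 (by linarith)
  push Not at c1
  by_cases c2 : s ≤ 2 * d * 1000000
  · have hδγ : δ ≤ γ := by
      rw [hsδ]
      calc γ ^ s ≤ γ ^ (1 : ℝ) := Real.rpow_le_rpow_of_exponent_ge hγ hγ1.le c1.le
        _ = γ := Real.rpow_one _
    refine (mid_case hd hN2 hγ hγB hδ0.le hδγ Λ).trans ?_
    apply mul_le_mul_of_nonneg_left _ hcard
    refine le_trans ?_ (rpow_final c1.le c2 hpP)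
    have hNc' : (2 * (2 * d * 1000000) ^ P : ℝ) ≤ N := by exact_mod_cast hNc
    have e : (1 / N + 1 / N : ℝ) = 2 / N := by ring
    rw [e, div_le_div_iff₀ (by linarith) (by positivity)]
    linarith
  push Not at c2
  obtain ⟨k, hk1, hk2⟩ := exists_scale s (2 * d) (by linarith) (by
    have : (Ls 0 : ℝ) = 1000000 := by norm_num [Ls]
    rw [this]; exact c2.le)
  obtain ⟨lo, hi, rfl⟩ := hΛ
  have hLk := Ls_ge k
  have hL0 : (0 : ℝ) ≤ Ls k := Nat.cast_nonneg _
  have hδγ : δ ≤ γ ^ (2 * Ls k) := by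
    rw [hsδ, ← Real.rpow_natCast]
    apply Real.rpow_le_rpow_of_exponent_ge hγ hγ1.le
    push_cast
    nlinarith
  have hdm : d * Ls k ≤ diam1 (Finset.Icc lo hi) := by
    have : (d * Ls k : ℝ) ≤ diam1 (Finset.Icc lo hi) := by
      have : (0 : ℝ) ≤ d * Ls k := by positivity
      linarith
    exact_mod_cast this
  refine (big_case hd hN2 (q := q) (by omega) hNa hNb hγ hγB hδ0.le k hδγ lo hi hdm).trans ?_
  apply mul_le_mul_of_nonneg_left _ hcard
  exact (num_final hd (by omega) (by omega) hγ hγP).trans (rpow_final c1.le hk2 hpP)
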